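/- Let g ≥ 2, let Γ be the genus-g surface group — the presented group with generators a₁,b₁,…,a_g,b_g and single relator [a₁,b₁]⋯[a_g,b_g] — with its standard generating set X = {a₁,b₁,…,a_g,b_g}, and let Δ₀ be a finitely generated subgroup of Γ. Then there exist constants C > 0 and D > 0 such that for every γ ∈ Γ with γ ∉ Δ₀ there exist a finite group Q and a homomorphism φ : Γ → Q with φ(γ) ∉ φ(Δ₀) and |Q| ≤ C·‖γ‖_X^D; moreover, the subgroup Λ = Δ₀ ⊔ ker(φ) satisfies: Δ₀ ≤ Λ, γ ∉ Λ, [Γ : Λ] ≤ |Q|, and the index of the normal core of Λ in Γ is at most |Q|. -/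

import Mathlib

open scoped commutatorElement in
/-- The single relator `[a₁,b₁][a₂,b₂]⋯[a_g,b_g]` of the genus-`g` surface group, as an
element of the free group on the `2g` generators `a₁,…,a_g` (indexed by `Sum.inl`) and
`b₁,…,b_g` (indexed by `Sum.inr`). -/
def surfaceRelator (g : ℕ) : FreeGroup (Fin g ⊕ Fin g) :=
  ((List.finRange g).map
    (fun i => ⁅FreeGroup.of (Sum.inl i : Fin g ⊕ Fin g),
               FreeGroup.of (Sum.inr i : Fin g ⊕ Fin g)⁆)).prod

/-- The fundamental group of the closed orientable surface of genus `g`. -/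
def SurfaceGroup (g : ℕ) : Type :=
  PresentedGroup ({surfaceRelator g} : Set (FreeGroup (Fin g ⊕ Fin g)))

noncomputable instance (g : ℕ) : Group (SurfaceGroup g) := by
  unfold SurfaceGroup; infer_instance

/-- The standard generating set `{a₁,b₁,…,a_g,b_g}` of the genus-`g` surface group. -/
def surfaceGens (g : ℕ) : Set (SurfaceGroup g) :=
  Set.range (PresentedGroup.of :
    (Fin g ⊕ Fin g) → PresentedGroup ({surfaceRelator g} : Set (FreeGroup (Fin g ⊕ Fin g))))

/-- The word norm of `γ` with respect to a generating set `X`: the least `m` such that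
`γ` is a product of `m` elements of `X ∪ X⁻¹`. -/
noncomputable def wordNorm {Γ : Type*} [Group Γ] (X : Set Γ) (γ : Γ) : ℕ :=
  sInf {m | ∃ l : List Γ, l.length = m ∧ (∀ x ∈ l, x ∈ X ∪ X⁻¹) ∧ l.prod = γ}

namespace SurfSep

/-- Adjacency in the `n`-cycle. -/
def Adj {n : ℕ} (i j : ZMod n) : Prop := j = i + 1 ∨ i = j + 1

theorem Adj.symm {n : ℕ} {i j : ZMod n} (h : Adj i j) : Adj j i := Or.symm h

theorem one_ne_zero_zmod {n : ℕ} (hn : 5 ≤ n) : (1 : ZMod n) ≠ 0 := by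
  have : Fact (1 < n) := ⟨by omega⟩
  exact one_ne_zero

theorem Adj.ne {n : ℕ} (hn : 5 ≤ n) {i j : ZMod n} (h : Adj i j) : i ≠ j := by
  rintro rfl
  have := one_ne_zero_zmod hn
  rcases h with h | h <;> exact this (by simpa using h.symm)

theorem Adj.other {n : ℕ} {i j k : ZMod n} (h : Adj i j) (h' : Adj i k) (hk : k ≠ j) :
    k = 2 * i - j := by
  rcases h with h | h <;> rcases h' with h' | h'
  · exact absurd (h'.trans h.symm) hk
  · rw [h, h']; ring
  · rw [h', h]; ring
  · exact absurd (add_right_cancel (h'.symm.trans h)) hk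

open Classical in
/-- The Coxeter matrix of the reflection group of the right-angled `n`-gon. -/
noncomputable def polyMatrix (n : ℕ) : CoxeterMatrix (ZMod n) where
  M := fun i j => if i = j then 1 else if Adj i j then 2 else 0
  isSymm := by
    refine Matrix.IsSymm.ext fun i j => ?_
    by_cases h : i = j
    · subst h; rfl
    · have h' : ¬ j = i := fun e => h e.symm
      have : Adj j i ↔ Adj i j := ⟨Adj.symm, Adj.symm⟩
      simp only [h, h', this]
  diagonal := by simp
  off_diagonal := by
    intro i j h
    simp only [h, if_false]
    split_ifs <;> simp

/-- The reflection group of the right-angled `n`-gon. -/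
abbrev PolyGroup (n : ℕ) : Type := (polyMatrix n).Group

/-- Its Coxeter system. -/
noncomputable abbrev pcs (n : ℕ) : CoxeterSystem (polyMatrix n) (PolyGroup n) :=
  (polyMatrix n).toCoxeterSystem

theorem isLiftable_of {n : ℕ} {G : Type*} [Monoid G] {f : ZMod n → G}
    (h1 : ∀ i, f i * f i = 1) (h2 : ∀ i, f i * f (i + 1) = f (i + 1) * f i) :
    (polyMatrix n).IsLiftable f := by
  intro i j
  have hM : (polyMatrix n) i j = (polyMatrix n).M i j := rfl
  rw [hM]
  simp only [polyMatrix]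
  split_ifs with h h'
  · subst h; simpa using h1 i
  · have hc : f i * f j = f j * f i := by
      rcases h' with h' | h'
      · rw [h']; exact h2 i
      · rw [h']; exact (h2 j).symm
    rw [pow_two]
    calc f i * f j * (f i * f j) = f i * f j * (f j * f i) := by rw [hc]
      _ = f i * (f j * f j) * f i := by simp only [mul_assoc]
      _ = 1 := by rw [h1, mul_one, h1]
  · simp

theorem simple_comm {n : ℕ} (hn : 5 ≤ n) {i j : ZMod n} (h : Adj i j) :
    (pcs n).simple i * (pcs n).simple j = (pcs n).simple j * (pcs n).simple i := by
  have h2 := (pcs n).simple_mul_simple_pow i j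
  have hM : (polyMatrix n) i j = (polyMatrix n).M i j := rfl
  have : (polyMatrix n).M i j = 2 := by
    simp [polyMatrix, h.ne hn, h]
  rw [hM, this, pow_two] at h2
  have := eq_inv_of_mul_eq_one_left h2
  rw [this, mul_inv_rev, (pcs n).inv_simple, (pcs n).inv_simple]

end SurfSep

namespace SurfSep

/-- There is an edge path labelled by the word `l` from `v` to `u`. -/
def PathE {n : ℕ} {V : Type} (E : ZMod n → V → V → Prop) : List (ZMod n) → V → V → Prop
  | [], v, u => v = u
  | s :: l, v, u => ∃ m, PathE E l v m ∧ E s m u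

theorem PathE.map {n : ℕ} {V V' : Type} {E : ZMod n → V → V → Prop} {E' : ZMod n → V' → V' → Prop}
    (f : V → V') (hf : ∀ s v u, E s v u → E' s (f v) (f u)) :
    ∀ (l : List (ZMod n)) (v u : V), PathE E l v u → PathE E' l (f v) (f u)
  | [], v, u, h => congrArg f h
  | s :: l, v, u, ⟨m, h1, h2⟩ => ⟨f m, PathE.map f hf l v m h1, hf _ _ _ h2⟩

/-- The square with corner `v` and sides `s`, `t` is present. -/
def FullSq {n : ℕ} {V : Type} (E : ZMod n → V → V → Prop) (v : V) (s t : ZMod n) : Prop :=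
  ∃ a c x, E s v a ∧ E t v c ∧ E t a x ∧ E s c x

theorem FullSq.map {n : ℕ} {V V' : Type} {E : ZMod n → V → V → Prop}
    {E' : ZMod n → V' → V' → Prop}
    (f : V → V') (hf : ∀ s v u, E s v u → E' s (f v) (f u)) {v : V} {s t : ZMod n}
    (h : FullSq E v s t) : FullSq E' (f v) s t := by
  obtain ⟨a, c, x, h1, h2, h3, h4⟩ := h
  exact ⟨f a, f c, f x, hf _ _ _ h1, hf _ _ _ h2, hf _ _ _ h3, hf _ _ _ h4⟩

open Classical in
/-- The perimeter: pairs of a dart and a missing square at one of its sides. -/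
noncomputable def badSet {n : ℕ} [NeZero n] {V : Type} [Fintype V]
    (E : ZMod n → V → V → Prop) : Finset (V × ZMod n × ZMod n) :=
  Finset.univ.filter fun x =>
    Adj x.2.1 x.2.2 ∧ (∃ u, E x.2.1 x.1 u) ∧ ¬ FullSq E x.1 x.2.1 x.2.2

open Classical in
/-- The darts. -/
noncomputable def dartSet {n : ℕ} [NeZero n] {V : Type} [Fintype V]
    (E : ZMod n → V → V → Prop) : Finset (V × ZMod n) :=
  Finset.univ.filter fun x => ∃ u, E x.2 x.1 u

theorem mem_badSet {n : ℕ} [NeZero n] {V : Type} [Fintype V]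
    {E : ZMod n → V → V → Prop} {v : V} {s t : ZMod n} :
    (v, s, t) ∈ badSet E ↔ Adj s t ∧ (∃ u, E s v u) ∧ ¬ FullSq E v s t := by
  simp [badSet]

theorem mem_dartSet {n : ℕ} [NeZero n] {V : Type} [Fintype V]
    {E : ZMod n → V → V → Prop} {v : V} {s : ZMod n} :
    (v, s) ∈ dartSet E ↔ ∃ u, E s v u := by
  simp [dartSet]

/-- How the perimeter changes under a morphism. -/
theorem bad_count {n : ℕ} [NeZero n] {V V' : Type} [Fintype V] [Fintype V']
    {E : ZMod n → V → V → Prop} {E' : ZMod n → V' → V' → Prop}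
    (f : V → V') (hf : ∀ s v u, E s v u → E' s (f v) (f u))
    (N : Finset (V' × ZMod n × ZMod n)) (R : Finset (V × ZMod n × ZMod n))
    (hR : R ⊆ badSet E) (hR' : ∀ v s t, (v, s, t) ∈ R → FullSq E' (f v) s t)
    (hN : ∀ v s t, (v, s, t) ∈ badSet E' → (v, s, t) ∉ N → ∃ w u, f w = v ∧ E s w u) :
    (badSet E').card + R.card ≤ (badSet E).card + N.card := by
  classical
  have hsub : badSet E' ⊆ (badSet E \ R).image (fun x => (f x.1, x.2)) ∪ N := by
    rintro ⟨v, s, t⟩ hx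
    rw [Finset.mem_union]
    by_cases hxN : (v, s, t) ∈ N
    · exact Or.inr hxN
    · left
      obtain ⟨w, u, hw, hE⟩ := hN v s t hx hxN
      obtain ⟨h1, h2, h3⟩ := mem_badSet.1 hx
      subst hw
      refine Finset.mem_image.2 ⟨(w, s, t), ?_, rfl⟩
      rw [Finset.mem_sdiff]
      refine ⟨mem_badSet.2 ⟨h1, ⟨u, hE⟩, fun hfull => h3 (hfull.map f hf)⟩, fun hmem => ?_⟩
      exact h3 (hR' w s t hmem)
  have h1 := (Finset.card_le_card hsub).trans (Finset.card_union_le _ _)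
  have h2 : ((badSet E \ R).image (fun x => (f x.1, x.2))).card ≤ (badSet E \ R).card :=
    Finset.card_image_le
  have h3 := Finset.card_sdiff_add_card_eq_card hR
  omega

/-- A finite partial `W`-set mapping to the coset space of `H`, with based loops
representing the elements of `T`. -/
structure PW {n : ℕ} (H : Subgroup (PolyGroup n)) (T : Set (PolyGroup n)) where
  V : Type
  fin : Fintype V
  E : ZMod n → V → V → Prop
  symm : ∀ {s v u}, E s v u → E s u v
  func : ∀ {s v u u'}, E s v u → E s v u' → u = u'
  lam : V → PolyGroup n ⧸ H
  hlam : ∀ {s v u}, E s v u → lam u = (pcs n).simple s • lam v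
  b : V
  hb : lam b = ((1 : PolyGroup n) : PolyGroup n ⧸ H)
  niso : ∀ v, ∃ s u, E s v u
  loops : ∀ h ∈ T, ∃ l : List (ZMod n), (pcs n).wordProd l = h ∧ PathE E l b b

attribute [instance] PW.fin

theorem PW.lam_eq {n : ℕ} {H : Subgroup (PolyGroup n)} {T : Set (PolyGroup n)} (Y : PW H T)
    (hn : 5 ≤ n) {s t : ZMod n} (hst : Adj s t) {v a c x y : Y.V} (h1 : Y.E s v a)
    (h2 : Y.E t v c) (h3 : Y.E t a x) (h4 : Y.E s c y) : Y.lam x = Y.lam y := by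
  rw [Y.hlam h3, Y.hlam h1, Y.hlam h4, Y.hlam h2, smul_smul, smul_smul, simple_comm hn hst]

/-- Folding two vertices decreases the perimeter. -/
theorem PW.fold {n : ℕ} [NeZero n] {H : Subgroup (PolyGroup n)} {T : Set (PolyGroup n)}
    (Y : PW H T) (x y : Y.V) (hxy : Y.lam x = Y.lam y) (v : Y.V) (s t : ZMod n)
    (hbad : (v, s, t) ∈ badSet Y.E)
    (hfull : ∀ (V' : Type) (E' : ZMod n → V' → V' → Prop) (f : Y.V → V'),
      (∀ s v u, Y.E s v u → E' s (f v) (f u)) → f x = f y → FullSq E' (f v) s t) :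
    ∃ Y' : PW H T, (badSet Y'.E).card < (badSet Y.E).card := by
  classical
  let P : Set (Setoid Y.V) := {r | r x y ∧ ∀ s v u v' u', r v v' → Y.E s v u → Y.E s v' u' → r u u'}
  let R : Setoid Y.V := sInf P
  have hRdef : ∀ p q, R p q ↔ ∀ r ∈ P, r p q := fun p q => Iff.rfl
  have hRP : ∀ r ∈ P, ∀ p q, R p q → r p q := fun r hr p q h => (hRdef p q).1 h r hr
  have hRxy : R x y := (hRdef x y).2 fun r hr => hr.1
  have hRc : ∀ s v u v' u', R v v' → Y.E s v u → Y.E s v' u' → R u u' := by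
    intro s v u v' u' h h1 h2
    exact (hRdef _ _).2 fun r hr => hr.2 s v u v' u' (hRP r hr _ _ h) h1 h2
  have hker : Setoid.ker Y.lam ∈ P := by
    refine ⟨hxy, ?_⟩
    intro s v u v' u' h h1 h2
    change Y.lam v = Y.lam v' at h
    change Y.lam u = Y.lam u'
    rw [Y.hlam h1, Y.hlam h2, h]
  let E' : ZMod n → Quotient R → Quotient R → Prop := fun s p q =>
    ∃ v u, Quotient.mk R v = p ∧ Quotient.mk R u = q ∧ Y.E s v u
  have hE' : ∀ s v u, Y.E s v u → E' s (Quotient.mk R v) (Quotient.mk R u) :=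
    fun s v u h => ⟨v, u, rfl, rfl, h⟩
  let Y' : PW H T :=
    { V := Quotient R
      fin := inferInstance
      E := E'
      symm := by
        rintro s _ _ ⟨v, u, rfl, rfl, h⟩
        exact ⟨u, v, rfl, rfl, Y.symm h⟩
      func := by
        rintro s _ _ _ ⟨v, u, rfl, rfl, h⟩ ⟨v', u', hv, rfl, h'⟩
        exact Quotient.sound (hRc s v u v' u' (R.symm (Quotient.exact hv)) h h')
      lam := Quotient.lift Y.lam fun p q h => hRP _ hker p q h
      hlam := by
        rintro s _ _ ⟨v, u, rfl, rfl, h⟩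
        exact Y.hlam h
      b := Quotient.mk R Y.b
      hb := Y.hb
      niso := by
        intro p
        induction p using Quotient.ind with
        | _ p =>
          obtain ⟨s, u, h⟩ := Y.niso p
          exact ⟨s, _, hE' s p u h⟩
      loops := by
        intro h hh
        obtain ⟨l, hl, hp⟩ := Y.loops h hh
        exact ⟨l, hl, hp.map (Quotient.mk R) hE'⟩ }
  refine ⟨Y', ?_⟩
  have := bad_count (E := Y.E) (E' := E') (Quotient.mk R) hE' ∅ {(v, s, t)}
    (by simpa using hbad)
    (by
      intro v' s' t' h
      simp only [Finset.mem_singleton, Prod.mk.injEq] at h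
      obtain ⟨rfl, rfl, rfl⟩ := h
      exact hfull _ E' _ hE' (Quotient.sound hRxy))
    (by
      intro p s' t' h _
      obtain ⟨-, ⟨q, v', u', hv, hu, h'⟩, -⟩ := mem_badSet.1 h
      exact ⟨v', u', hv, h'⟩)
  simp only [Finset.card_singleton, Finset.card_empty] at this
  change (badSet E').card < _
  have hfe : (Y'.fin : Fintype (Quotient R)) = Y'.fin := rfl
  calc _ < (badSet E').card + 1 := Nat.lt_succ_self _
    _ ≤ _ := this

/-- Completing a square with three sides decreases the perimeter. -/
theorem PW.addEdge {n : ℕ} [NeZero n] (hn : 5 ≤ n) {H : Subgroup (PolyGroup n)}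
    {T : Set (PolyGroup n)}
    (Y : PW H T) (v a c x : Y.V) (s t : ZMod n) (hst : Adj s t)
    (h1 : Y.E s v a) (h2 : Y.E t v c) (h3 : Y.E t a x) (h4 : ¬ ∃ u, Y.E s c u)
    (h5 : ¬ ∃ u, Y.E s x u) :
    ∃ Y' : PW H T, (badSet Y'.E).card < (badSet Y.E).card := by
  classical
  have hne := hst.ne hn
  let E' : ZMod n → Y.V → Y.V → Prop := fun r p q =>
    Y.E r p q ∨ (r = s ∧ ((p = c ∧ q = x) ∨ (p = x ∧ q = c)))
  have hE' : ∀ s v u, Y.E s v u → E' s (id v) (id u) := fun s v u h => Or.inl h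
  have hcx : E' s c x := Or.inr ⟨rfl, Or.inl ⟨rfl, rfl⟩⟩
  have hxc : E' s x c := Or.inr ⟨rfl, Or.inr ⟨rfl, rfl⟩⟩
  have hl : Y.lam x = (pcs n).simple s • Y.lam c := by
    rw [Y.hlam h3, Y.hlam h1, Y.hlam h2, smul_smul, smul_smul, simple_comm hn hst]
  let Y' : PW H T :=
    { V := Y.V
      fin := inferInstance
      E := E'
      symm := by
        rintro r p q (h | ⟨rfl, h | h⟩)
        · exact Or.inl (Y.symm h)
        · exact Or.inr ⟨rfl, Or.inr ⟨h.2, h.1⟩⟩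
        · exact Or.inr ⟨rfl, Or.inl ⟨h.2, h.1⟩⟩
      func := by
        rintro r p q q' (h | ⟨hr, h⟩) (h' | ⟨hr', h'⟩)
        · exact Y.func h h'
        · subst hr'
          rcases h' with ⟨rfl, rfl⟩ | ⟨rfl, rfl⟩
          · exact absurd ⟨_, h⟩ h4
          · exact absurd ⟨_, h⟩ h5
        · subst hr
          rcases h with ⟨rfl, rfl⟩ | ⟨rfl, rfl⟩
          · exact absurd ⟨_, h'⟩ h4
          · exact absurd ⟨_, h'⟩ h5
        · rcases h with ⟨e1, e2⟩ | ⟨e1, e2⟩ <;> rcases h' with ⟨e3, e4⟩ | ⟨e3, e4⟩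
          · rw [e2, e4]
          · rw [e2, e4, ← e1, ← e3]
          · rw [e2, e4, ← e1, ← e3]
          · rw [e2, e4]
      lam := Y.lam
      hlam := by
        rintro r p q (h | ⟨rfl, ⟨rfl, rfl⟩ | ⟨rfl, rfl⟩⟩)
        · exact Y.hlam h
        · exact hl
        · rw [hl, smul_smul, (pcs n).simple_mul_simple_self, one_smul]
      b := Y.b
      hb := Y.hb
      niso := by
        intro p
        obtain ⟨s, u, h⟩ := Y.niso p
        exact ⟨s, _, hE' s p u h⟩
      loops := by
        intro h hh
        obtain ⟨l, hl, hp⟩ := Y.loops h hh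
        exact ⟨l, hl, hp.map id hE'⟩ }
  refine ⟨Y', ?_⟩
  change (badSet E').card < _
  have fv : FullSq E' v s t := ⟨a, c, x, Or.inl h1, Or.inl h2, Or.inl h3, hcx⟩
  have fv' : FullSq E' v t s := ⟨c, a, x, Or.inl h2, Or.inl h1, hcx, Or.inl h3⟩
  have fa : FullSq E' a t s := ⟨x, v, c, Or.inl h3, Or.inl (Y.symm h1), hxc, Or.inl h2⟩
  have fc : FullSq E' c s t :=
    ⟨x, v, a, hcx, Or.inl (Y.symm h2), Or.inl (Y.symm h3), Or.inl h1⟩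
  have fx : FullSq E' x s t :=
    ⟨c, a, v, hxc, Or.inl (Y.symm h3), Or.inl (Y.symm h2), Or.inl (Y.symm h1)⟩
  have bv : (v, s, t) ∈ badSet Y.E := by
    refine mem_badSet.2 ⟨hst, ⟨a, h1⟩, ?_⟩
    rintro ⟨a', c', x', e1, e2, e3, e4⟩
    rw [← Y.func h2 e2] at e4
    exact h4 ⟨_, e4⟩
  have bv' : (v, t, s) ∈ badSet Y.E := by
    refine mem_badSet.2 ⟨hst.symm, ⟨c, h2⟩, ?_⟩
    rintro ⟨c', a', x', e1, e2, e3, e4⟩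
    rw [← Y.func h2 e1] at e3
    exact h4 ⟨_, e3⟩
  have ba : (a, t, s) ∈ badSet Y.E := by
    refine mem_badSet.2 ⟨hst.symm, ⟨x, h3⟩, ?_⟩
    rintro ⟨c', a', x', e1, e2, e3, e4⟩
    rw [← Y.func h3 e1] at e3
    exact h5 ⟨_, e3⟩
  have hN : ∀ w r q, (w, r, q) ∈ badSet E' →
      (w, r, q) ∉ ({(c, s, 2 * s - t), (x, s, 2 * s - t)} : Finset (Y.V × ZMod n × ZMod n)) →
      ∃ w' u, id w' = w ∧ Y.E r w' u := by
    intro w r q h hnot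
    obtain ⟨hadj, ⟨u, hu⟩, hnf⟩ := mem_badSet.1 h
    rcases hu with hu | ⟨rfl, hu⟩
    · exact ⟨w, u, rfl, hu⟩
    · exfalso
      have hqt : q ≠ t := by
        rintro rfl
        rcases hu with ⟨rfl, -⟩ | ⟨rfl, -⟩
        · exact hnf fc
        · exact hnf fx
      have := hst.other hadj hqt
      subst this
      rcases hu with ⟨rfl, -⟩ | ⟨rfl, -⟩ <;> simp at hnot
  by_cases hav : a = v
  · subst hav
    have hxc' : x = c := Y.func h3 h2
    subst hxc'
    have := bad_count (E := Y.E) (E' := E') id hE' {(x, s, 2 * s - t)} {(a, s, t), (a, t, s)}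
      (by
        intro z hz
        simp only [Finset.mem_insert, Finset.mem_singleton] at hz
        rcases hz with rfl | rfl <;> assumption)
      (by
        intro v' s' t' h
        simp only [Finset.mem_insert, Finset.mem_singleton, Prod.mk.injEq] at h
        rcases h with ⟨rfl, rfl, rfl⟩ | ⟨rfl, rfl, rfl⟩ <;> assumption)
      (by simpa using hN)
    rw [Finset.card_pair (by simp [hne]), Finset.card_singleton] at this
    omega
  · have := bad_count (E := Y.E) (E' := E') id hE' {(c, s, 2 * s - t), (x, s, 2 * s - t)}
      {(v, s, t), (v, t, s), (a, t, s)}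
      (by
        intro z hz
        simp only [Finset.mem_insert, Finset.mem_singleton] at hz
        rcases hz with rfl | rfl | rfl <;> assumption)
      (by
        intro v' s' t' h
        simp only [Finset.mem_insert, Finset.mem_singleton, Prod.mk.injEq] at h
        rcases h with ⟨rfl, rfl, rfl⟩ | ⟨rfl, rfl, rfl⟩ | ⟨rfl, rfl, rfl⟩ <;> assumption)
      hN
    have h3' : ({(v, s, t), (v, t, s), (a, t, s)} : Finset (Y.V × ZMod n × ZMod n)).card = 3 := by
      rw [Finset.card_eq_three]
      exact ⟨_, _, _, by simp [hne], by simp [hne], by simp [Ne.symm hav], rfl⟩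
    have h2' : ({(c, s, 2 * s - t), (x, s, 2 * s - t)} :
        Finset (Y.V × ZMod n × ZMod n)).card ≤ 2 := Finset.card_le_two
    omega

/-- Filling a corner adds one vertex and four darts without increasing the perimeter. -/
theorem PW.addVertex {n : ℕ} [NeZero n] (hn : 5 ≤ n) {H : Subgroup (PolyGroup n)}
    {T : Set (PolyGroup n)}
    (Y : PW H T) (v a c : Y.V) (s t : ZMod n) (hst : Adj s t)
    (h1 : Y.E s v a) (h2 : Y.E t v c) (h3 : ¬ ∃ u, Y.E t a u) (h4 : ¬ ∃ u, Y.E s c u) :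
    ∃ Y' : PW H T, (badSet Y'.E).card ≤ (badSet Y.E).card ∧
      (dartSet Y'.E).card ≤ (dartSet Y.E).card + 4 ∧
      Fintype.card Y'.V = Fintype.card Y.V + 1 := by
  classical
  have hne := hst.ne hn
  have hav : a ≠ v := fun e => h3 ⟨c, e ▸ h2⟩
  have hcv : c ≠ v := fun e => h4 ⟨a, e ▸ h1⟩
  let E' : ZMod n → Option Y.V → Option Y.V → Prop := fun r p q =>
    (∃ p' q', p = some p' ∧ q = some q' ∧ Y.E r p' q') ∨
    (r = t ∧ ((p = some a ∧ q = none) ∨ (p = none ∧ q = some a))) ∨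
    (r = s ∧ ((p = some c ∧ q = none) ∨ (p = none ∧ q = some c)))
  have hE' : ∀ s v u, Y.E s v u → E' s (some v) (some u) :=
    fun s v u h => Or.inl ⟨v, u, rfl, rfl, h⟩
  have ean : E' t (some a) none := Or.inr (Or.inl ⟨rfl, Or.inl ⟨rfl, rfl⟩⟩)
  have ena : E' t none (some a) := Or.inr (Or.inl ⟨rfl, Or.inr ⟨rfl, rfl⟩⟩)
  have ecn : E' s (some c) none := Or.inr (Or.inr ⟨rfl, Or.inl ⟨rfl, rfl⟩⟩)
  have enc : E' s none (some c) := Or.inr (Or.inr ⟨rfl, Or.inr ⟨rfl, rfl⟩⟩)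
  have hlt : (pcs n).simple t • Y.lam a = (pcs n).simple s • Y.lam c := by
    rw [Y.hlam h1, Y.hlam h2, smul_smul, smul_smul, simple_comm hn hst]
  let lam' : Option Y.V → PolyGroup n ⧸ H := fun p =>
    match p with
    | none => (pcs n).simple t • Y.lam a
    | some p => Y.lam p
  have hss : ∀ (r : ZMod n) (z : PolyGroup n ⧸ H),
      (pcs n).simple r • (pcs n).simple r • z = z := by
    intro r z
    rw [smul_smul, (pcs n).simple_mul_simple_self, one_smul]
  let Y' : PW H T :=
    { V := Option Y.V
      fin := inferInstance
      E := E'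
      symm := by
        rintro r p q (⟨p', q', rfl, rfl, h⟩ | ⟨rfl, h⟩ | ⟨rfl, h⟩)
        · exact hE' _ _ _ (Y.symm h)
        · exact Or.inr (Or.inl ⟨rfl, h.symm.imp And.symm And.symm⟩)
        · exact Or.inr (Or.inr ⟨rfl, h.symm.imp And.symm And.symm⟩)
      func := by
        rintro r p q q' (⟨p1, q1, rfl, rfl, h⟩ | ⟨hr, ⟨rfl, rfl⟩ | ⟨rfl, rfl⟩⟩ |
            ⟨hr, ⟨rfl, rfl⟩ | ⟨rfl, rfl⟩⟩)
          (⟨p2, q2, e1, rfl, h'⟩ | ⟨hr', ⟨e1, rfl⟩ | ⟨e1, rfl⟩⟩ | ⟨hr', ⟨e1, rfl⟩ | ⟨e1, rfl⟩⟩)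
        all_goals try first | rfl | (cases e1; done)
        · cases e1; rw [Y.func h h']
        · cases e1; subst hr'; exact absurd ⟨_, h⟩ h3
        · cases e1; subst hr'; exact absurd ⟨_, h⟩ h4
        · cases e1; subst hr; exact absurd ⟨_, h'⟩ h3
        · exact absurd (hr'.symm.trans hr) hne
        · cases e1; subst hr; exact absurd ⟨_, h'⟩ h4
        · exact absurd (hr.symm.trans hr') hne
      lam := lam'
      hlam := by
        rintro r p q (⟨p', q', rfl, rfl, h⟩ | ⟨rfl, ⟨rfl, rfl⟩ | ⟨rfl, rfl⟩⟩ |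
            ⟨rfl, ⟨rfl, rfl⟩ | ⟨rfl, rfl⟩⟩)
        · exact Y.hlam h
        · rfl
        · exact (hss _ _).symm
        · exact hlt
        · change Y.lam c = (pcs n).simple r • (pcs n).simple t • Y.lam a
          rw [hlt]; exact (hss _ _).symm
      b := some Y.b
      hb := Y.hb
      niso := by
        intro p
        rcases p with _ | p
        · exact ⟨_, _, ena⟩
        · obtain ⟨s, u, h⟩ := Y.niso p
          exact ⟨s, _, hE' s p u h⟩
      loops := by
        intro h hh
        obtain ⟨l, hl, hp⟩ := Y.loops h hh
        exact ⟨l, hl, hp.map some hE'⟩ }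
  have newd : ∀ w r u, E' r w u → (∃ w' u', some w' = w ∧ Y.E r w' u') ∨
      (w = some a ∧ r = t) ∨ (w = none ∧ r = t) ∨ (w = some c ∧ r = s) ∨ (w = none ∧ r = s) := by
    rintro w r u (⟨p', q', rfl, rfl, h⟩ | ⟨rfl, ⟨rfl, rfl⟩ | ⟨rfl, rfl⟩⟩ |
            ⟨rfl, ⟨rfl, rfl⟩ | ⟨rfl, rfl⟩⟩)
    · exact Or.inl ⟨p', q', rfl, h⟩
    · simp
    · simp
    · simp
    · simp
  refine ⟨Y', ?_, ?_, ?_⟩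
  · change (badSet E').card ≤ _
    have fv : FullSq E' (some v) s t := ⟨_, _, none, hE' _ _ _ h1, hE' _ _ _ h2, ean, ecn⟩
    have fv' : FullSq E' (some v) t s := ⟨_, _, none, hE' _ _ _ h2, hE' _ _ _ h1, ecn, ean⟩
    have fa : FullSq E' (some a) s t :=
      ⟨_, _, some c, hE' _ _ _ (Y.symm h1), ean, hE' _ _ _ h2, enc⟩
    have fa' : FullSq E' (some a) t s :=
      ⟨_, _, some c, ean, hE' _ _ _ (Y.symm h1), enc, hE' _ _ _ h2⟩
    have fc : FullSq E' (some c) t s :=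
      ⟨_, _, some a, hE' _ _ _ (Y.symm h2), ecn, hE' _ _ _ h1, ena⟩
    have fc' : FullSq E' (some c) s t :=
      ⟨_, _, some a, ecn, hE' _ _ _ (Y.symm h2), ena, hE' _ _ _ h1⟩
    have fn : FullSq E' none t s :=
      ⟨_, _, some v, ena, enc, hE' _ _ _ (Y.symm h1), hE' _ _ _ (Y.symm h2)⟩
    have fn' : FullSq E' none s t :=
      ⟨_, _, some v, enc, ena, hE' _ _ _ (Y.symm h2), hE' _ _ _ (Y.symm h1)⟩
    have bv : (v, s, t) ∈ badSet Y.E := by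
      refine mem_badSet.2 ⟨hst, ⟨a, h1⟩, ?_⟩
      rintro ⟨a', c', x', e1, e2, e3, e4⟩
      rw [← Y.func h2 e2] at e4
      exact h4 ⟨_, e4⟩
    have bv' : (v, t, s) ∈ badSet Y.E := by
      refine mem_badSet.2 ⟨hst.symm, ⟨c, h2⟩, ?_⟩
      rintro ⟨c', a', x', e1, e2, e3, e4⟩
      rw [← Y.func h2 e1] at e3
      exact h4 ⟨_, e3⟩
    have ba : (a, s, t) ∈ badSet Y.E := by
      refine mem_badSet.2 ⟨hst, ⟨v, Y.symm h1⟩, ?_⟩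
      rintro ⟨c', a', x', e1, e2, e3, e4⟩
      exact h3 ⟨_, e2⟩
    have bc : (c, t, s) ∈ badSet Y.E := by
      refine mem_badSet.2 ⟨hst.symm, ⟨v, Y.symm h2⟩, ?_⟩
      rintro ⟨c', a', x', e1, e2, e3, e4⟩
      exact h4 ⟨_, e2⟩
    have := bad_count (E := Y.E) (E' := E') some hE'
      {(some a, t, 2 * t - s), (none, t, 2 * t - s), (some c, s, 2 * s - t), (none, s, 2 * s - t)}
      {(v, s, t), (v, t, s), (a, s, t), (c, t, s)}
      (by
        intro z hz
        simp only [Finset.mem_insert, Finset.mem_singleton] at hz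
        rcases hz with rfl | rfl | rfl | rfl <;> assumption)
      (by
        intro v' s' t' h
        simp only [Finset.mem_insert, Finset.mem_singleton, Prod.mk.injEq] at h
        rcases h with ⟨rfl, rfl, rfl⟩ | ⟨rfl, rfl, rfl⟩ | ⟨rfl, rfl, rfl⟩ | ⟨rfl, rfl, rfl⟩ <;>
          assumption)
      (by
        intro w r q h hnot
        obtain ⟨hadj, ⟨u, hu⟩, hnf⟩ := mem_badSet.1 h
        rcases newd w r u hu with hu | hu
        · exact hu
        · exfalso
          rcases hu with ⟨rfl, rfl⟩ | ⟨rfl, rfl⟩ | ⟨rfl, rfl⟩ | ⟨rfl, rfl⟩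
          · have hq : q ≠ s := by rintro rfl; exact hnf fa'
            have := hst.symm.other hadj hq
            subst this; simp at hnot
          · have hq : q ≠ s := by rintro rfl; exact hnf fn
            have := hst.symm.other hadj hq
            subst this; simp at hnot
          · have hq : q ≠ t := by rintro rfl; exact hnf fc'
            have := hst.other hadj hq
            subst this; simp at hnot
          · have hq : q ≠ t := by rintro rfl; exact hnf fn'
            have := hst.other hadj hq
            subst this; simp at hnot)
    have hc4 : ({(v, s, t), (v, t, s), (a, s, t), (c, t, s)} :
        Finset (Y.V × ZMod n × ZMod n)).card = 4 := by
      rw [Finset.card_insert_of_notMem, Finset.card_insert_of_notMem, Finset.card_pair]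
      · simp [hne]
      · simp [hne.symm, hcv.symm]
      · simp [hne, hav.symm]
    have hc4' := Finset.card_le_four (a := (some a, t, 2 * t - s)) (b := (none, t, 2 * t - s))
      (c := (some c, s, 2 * s - t)) (d := (none, s, 2 * s - t))
    omega
  · change (dartSet E').card ≤ _
    have hsub : dartSet E' ⊆ (dartSet Y.E).image (fun x => (some x.1, x.2)) ∪
        {(some a, t), (none, t), (some c, s), (none, s)} := by
      rintro ⟨w, r⟩ h
      obtain ⟨u, hu⟩ := mem_dartSet.1 h
      rw [Finset.mem_union]
      rcases newd w r u hu with ⟨w', u', rfl, hu2⟩ | hu2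
      · exact Or.inl (Finset.mem_image.2 ⟨(w', r), mem_dartSet.2 ⟨u', hu2⟩, rfl⟩)
      · right
        rcases hu2 with ⟨rfl, rfl⟩ | ⟨rfl, rfl⟩ | ⟨rfl, rfl⟩ | ⟨rfl, rfl⟩ <;> simp
    have hc := (Finset.card_le_card hsub).trans (Finset.card_union_le _ _)
    have hi : ((dartSet Y.E).image (fun x : Y.V × ZMod n => (some x.1, x.2))).card ≤
        (dartSet Y.E).card := Finset.card_image_le
    have h4' := Finset.card_le_four (a := (some a, t)) (b := ((none : Option Y.V), t))
      (c := (some c, s)) (d := ((none : Option Y.V), s))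
    omega
  · change Fintype.card (Option Y.V) = _
    exact Fintype.card_option

end SurfSep

namespace SurfSep

theorem FullSq.swap {n : ℕ} {V : Type} {E : ZMod n → V → V → Prop} {v : V} {s t : ZMod n}
    (h : FullSq E v s t) : FullSq E v t s := by
  obtain ⟨a, c, x, h1, h2, h3, h4⟩ := h
  exact ⟨c, a, x, h2, h1, h4, h3⟩

/-- Local completeness: every corner is filled by a square. -/
def LC {n : ℕ} {V : Type} (E : ZMod n → V → V → Prop) : Prop :=
  ∀ v s t, Adj s t → (∃ u, E s v u) → (∃ u, E t v u) → FullSq E v s t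

theorem PW.step1 {n : ℕ} [NeZero n] (hn : 5 ≤ n) {H : Subgroup (PolyGroup n)}
    {T : Set (PolyGroup n)}
    (Y : PW H T) (v a c x : Y.V) (s t : ZMod n) (hst : Adj s t)
    (h1 : Y.E s v a) (h2 : Y.E t v c) (h3 : Y.E t a x) (hnf : ¬ FullSq Y.E v s t) :
    ∃ Y' : PW H T, (badSet Y'.E).card < (badSet Y.E).card := by
  have hbad : (v, s, t) ∈ badSet Y.E := mem_badSet.2 ⟨hst, ⟨a, h1⟩, hnf⟩
  by_cases h4 : ∃ y, Y.E s c y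
  · obtain ⟨y, h4⟩ := h4
    refine Y.fold x y (Y.lam_eq hn hst h1 h2 h3 h4) v s t hbad ?_
    intro V' E' f hf hxy
    exact ⟨f a, f c, f x, hf _ _ _ h1, hf _ _ _ h2, hf _ _ _ h3, hxy ▸ hf _ _ _ h4⟩
  · by_cases h5 : ∃ y, Y.E s x y
    · obtain ⟨y, h5⟩ := h5
      refine Y.fold y c ?_ v s t hbad ?_
      · rw [Y.hlam h5, Y.hlam h3, Y.hlam h1, Y.hlam h2, smul_smul, smul_smul]
        congr 1
        rw [mul_assoc, ← simple_comm hn hst, ← mul_assoc,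
          (pcs n).simple_mul_simple_self, one_mul]
      · intro V' E' f hf hyc
        exact ⟨f a, f c, f x, hf _ _ _ h1, hf _ _ _ h2, hf _ _ _ h3,
          hyc ▸ hf _ _ _ (Y.symm h5)⟩
    · exact Y.addEdge hn v a c x s t hst h1 h2 h3 h4 h5

theorem PW.card_bound {n : ℕ} [NeZero n] (hn : 5 ≤ n) {H : Subgroup (PolyGroup n)}
    {T : Set (PolyGroup n)} (Y : PW H T) :
    5 * Fintype.card Y.V ≤ (dartSet Y.E).card + 5 * (badSet Y.E).card := by
  classical
  have e1 := Finset.card_eq_sum_card_fiberwise (s := dartSet Y.E) (t := Finset.univ)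
    (f := fun x : Y.V × ZMod n => x.1) (fun x _ => Finset.mem_coe.2 (Finset.mem_univ _))
  have e2 := Finset.card_eq_sum_card_fiberwise (s := badSet Y.E) (t := Finset.univ)
    (f := fun x : Y.V × ZMod n × ZMod n => x.1) (fun x _ => Finset.mem_coe.2 (Finset.mem_univ _))
  rw [e1, e2, Finset.mul_sum, ← Finset.sum_add_distrib, Fintype.card, mul_comm,
    ← smul_eq_mul, ← Finset.sum_const]
  refine Finset.sum_le_sum fun v _ => ?_
  by_cases hb : ∃ s t, (v, s, t) ∈ badSet Y.E
  · obtain ⟨s, t, h⟩ := hb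
    have : 0 < ((badSet Y.E).filter (fun x => x.1 = v)).card :=
      Finset.card_pos.2 ⟨(v, s, t), Finset.mem_filter.2 ⟨h, rfl⟩⟩
    omega
  · push Not at hb
    obtain ⟨s0, u0, h0⟩ := Y.niso v
    have hk : ∀ k : ℕ, ∃ u, Y.E (s0 + k) v u := by
      intro k
      induction k with
      | zero => exact ⟨u0, by simpa using h0⟩
      | succ k ih =>
        by_contra hcon
        refine hb (s0 + k) (s0 + (k + 1 : ℕ)) (mem_badSet.2 ⟨Or.inl (by push_cast; ring), ih, ?_⟩)
        rintro ⟨a, c, x, -, h, -⟩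
        exact hcon ⟨c, h⟩
    have hall : ∀ s, ∃ u, Y.E s v u := by
      intro s
      have := hk (s - s0).val
      simpa using this
    have hsub : (Finset.univ : Finset (ZMod n)).image (fun s => (v, s)) ⊆
        (dartSet Y.E).filter (fun x => x.1 = v) := by
      intro x hx
      obtain ⟨s, -, rfl⟩ := Finset.mem_image.1 hx
      exact Finset.mem_filter.2 ⟨mem_dartSet.2 (hall s), rfl⟩
    have hc := Finset.card_le_card hsub
    rw [Finset.card_image_of_injective _ (fun a b h => (Prod.mk.inj h).2), Finset.card_univ,
      ZMod.card] at hc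
    omega

theorem PW.exists_LC {n : ℕ} [NeZero n] (hn : 5 ≤ n) {H : Subgroup (PolyGroup n)}
    {T : Set (PolyGroup n)} (Y : PW H T) : ∃ Y' : PW H T, LC Y'.E := by
  have key : ∀ B : ℕ, ∀ Y : PW H T, (badSet Y.E).card < B → ∃ Y' : PW H T, LC Y'.E := by
    intro B
    induction B with
    | zero => intro Y h; omega
    | succ B ihB =>
      have inner : ∀ M : ℕ, ∀ Y : PW H T, (badSet Y.E).card ≤ B →
          (dartSet Y.E).card + 5 * B ≤ M + 5 * Fintype.card Y.V → ∃ Y' : PW H T, LC Y'.E := by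
        intro M
        induction M with
        | zero =>
          intro Y hB hM
          by_cases hLC : LC Y.E
          · exact ⟨Y, hLC⟩
          unfold LC at hLC
          push Not at hLC
          obtain ⟨v, s, t, hst, ⟨a, h1⟩, ⟨c, h2⟩, hnf⟩ := hLC
          by_cases h3 : ∃ x, Y.E t a x
          · obtain ⟨x, h3⟩ := h3
            obtain ⟨Y', h'⟩ := Y.step1 hn v a c x s t hst h1 h2 h3 hnf
            exact ihB Y' (by omega)
          by_cases h4 : ∃ x, Y.E s c x
          · obtain ⟨x, h4⟩ := h4
            obtain ⟨Y', h'⟩ := Y.step1 hn v c a x t s hst.symm h2 h1 h4 (fun h => hnf h.swap)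
            exact ihB Y' (by omega)
          obtain ⟨Y', h5, h6, h7⟩ := Y.addVertex hn v a c s t hst h1 h2 h3 h4
          have := Y'.card_bound hn
          omega
        | succ M ihM =>
          intro Y hB hM
          by_cases hLC : LC Y.E
          · exact ⟨Y, hLC⟩
          unfold LC at hLC
          push Not at hLC
          obtain ⟨v, s, t, hst, ⟨a, h1⟩, ⟨c, h2⟩, hnf⟩ := hLC
          by_cases h3 : ∃ x, Y.E t a x
          · obtain ⟨x, h3⟩ := h3
            obtain ⟨Y', h'⟩ := Y.step1 hn v a c x s t hst h1 h2 h3 hnf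
            exact ihB Y' (by omega)
          by_cases h4 : ∃ x, Y.E s c x
          · obtain ⟨x, h4⟩ := h4
            obtain ⟨Y', h'⟩ := Y.step1 hn v c a x t s hst.symm h2 h1 h4 (fun h => hnf h.swap)
            exact ihB Y' (by omega)
          obtain ⟨Y', h5, h6, h7⟩ := Y.addVertex hn v a c s t hst h1 h2 h3 h4
          exact ihM Y' (by omega) (by omega)
      intro Y hY
      exact inner ((dartSet Y.E).card + 5 * B) Y (by omega) (by omega)
  exact key _ Y (Nat.lt_succ_self _)

/-- The initial partial `W`-set: a ball in the coset space. -/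
theorem PW.exists_init {n : ℕ} [NeZero n] (H : Subgroup (PolyGroup n))
    (T : Finset (PolyGroup n)) (hT : ∀ h ∈ T, h ∈ H) : Nonempty (PW H (T : Set (PolyGroup n))) := by
  classical
  choose wd hwd using fun w : PolyGroup n => (pcs n).wordProd_surjective w
  let N : ℕ := T.sup (fun h => (wd h).length) + 1
  let S : Set (PolyGroup n ⧸ H) :=
    {q | ∃ l : List (ZMod n), l.length ≤ N ∧ q = (((pcs n).wordProd l : PolyGroup n) : PolyGroup n ⧸ H)}
  have hS : S.Finite := by
    have hf : Set.Finite {l : List (ZMod n) | l.length ≤ N} := List.finite_length_le _ _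
    refine (hf.image (fun l => (((pcs n).wordProd l : PolyGroup n) : PolyGroup n ⧸ H))).subset ?_
    rintro q ⟨l, hl, rfl⟩
    exact ⟨l, hl, rfl⟩
  have hmem : ∀ l : List (ZMod n), l.length ≤ N →
      (((pcs n).wordProd l : PolyGroup n) : PolyGroup n ⧸ H) ∈ S := fun l hl => ⟨l, hl, rfl⟩
  have hsm : ∀ s l, (pcs n).simple s • (((pcs n).wordProd l : PolyGroup n) : PolyGroup n ⧸ H) =
      (((pcs n).wordProd (s :: l) : PolyGroup n) : PolyGroup n ⧸ H) := by
    intro s l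
    rw [(pcs n).wordProd_cons]; rfl
  let E : ZMod n → S → S → Prop := fun s q q' => q'.1 = (pcs n).simple s • q.1
  have hsym : ∀ {s v u}, E s v u → E s u v := by
    intro s v u h
    change v.1 = (pcs n).simple s • u.1
    change u.1 = (pcs n).simple s • v.1 at h
    rw [h, smul_smul, (pcs n).simple_mul_simple_self, one_smul]
  have hpath : ∀ (l : List (ZMod n)) (hl : l.length ≤ N),
      PathE E l ⟨_, hmem [] (by simp)⟩ ⟨_, hmem l hl⟩ := by
    intro l
    induction l with
    | nil => intro hl; rfl
    | cons s l ih =>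
      intro hl
      have hl' : l.length ≤ N := by simp only [List.length_cons] at hl; omega
      exact ⟨_, ih hl', (hsm s l).symm⟩
  exact ⟨{
    V := S
    fin := hS.fintype
    E := E
    symm := hsym
    func := fun {s v u u'} h h' => Subtype.ext (Eq.trans h (Eq.symm h'))
    lam := fun q => q.1
    hlam := fun h => h
    b := ⟨_, hmem [] (by simp)⟩
    hb := by simp
    niso := by
      rintro ⟨q, l, hl, rfl⟩
      cases l with
      | nil => exact ⟨0, ⟨_, hmem [0] (by simp [N])⟩, (hsm 0 []).symm⟩
      | cons s l =>
        refine ⟨s, ⟨_, hmem l (by simp only [List.length_cons] at hl; omega)⟩, hsym ?_⟩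
        exact (hsm s l).symm
    loops := by
      intro h hh
      have hlen : (wd h).length ≤ N :=
        (Finset.le_sup (f := fun h => (wd h).length) (Finset.mem_coe.1 hh)).trans (Nat.le_succ _)
      refine ⟨wd h, hwd h, ?_⟩
      have := hpath (wd h) hlen
      convert this using 1
      refine Subtype.ext ?_
      change (((pcs n).wordProd [] : PolyGroup n) : PolyGroup n ⧸ H) =
        (((pcs n).wordProd (wd h) : PolyGroup n) : PolyGroup n ⧸ H)
      rw [hwd, QuotientGroup.eq]
      simpa using hT h hh }⟩

end SurfSep

namespace SurfSep

section Retract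

variable {n : ℕ} {V : Type} (E : ZMod n → V → V → Prop)

open Classical in
/-- The action of a generator on `V × W`. -/
noncomputable def actE (s : ZMod n) (p : V × PolyGroup n) : V × PolyGroup n :=
  if h : ∃ u, E s p.1 u then (h.choose, (pcs n).simple s * p.2) else p

variable {E}

theorem actE_of (func : ∀ s v u u', E s v u → E s v u' → u = u') {s : ZMod n} {v u : V}
    (h : E s v u) (x : PolyGroup n) : actE E s (v, x) = (u, (pcs n).simple s * x) := by
  have h' : ∃ u, E s (v, x).1 u := ⟨u, h⟩
  rw [actE, dif_pos h', func _ _ _ _ h'.choose_spec h]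

theorem actE_not {s : ZMod n} {v : V} (h : ¬ ∃ u, E s v u) (x : PolyGroup n) :
    actE E s (v, x) = (v, x) := by
  rw [actE, dif_neg h]

theorem actE_invol (symm : ∀ s v u, E s v u → E s u v)
    (func : ∀ s v u u', E s v u → E s v u' → u = u') (s : ZMod n) (p : V × PolyGroup n) :
    actE E s (actE E s p) = p := by
  obtain ⟨v, x⟩ := p
  by_cases h : ∃ u, E s v u
  · obtain ⟨u, h⟩ := h
    rw [actE_of func h, actE_of func (symm _ _ _ h), (pcs n).simple_mul_simple_cancel_left]
  · rw [actE_not h, actE_not h]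

theorem actE_comm (hn : 5 ≤ n) (symm : ∀ s v u, E s v u → E s u v)
    (func : ∀ s v u u', E s v u → E s v u' → u = u') (lc : LC E)
    {s t : ZMod n} (hst : Adj s t) (p : V × PolyGroup n) :
    actE E s (actE E t p) = actE E t (actE E s p) := by
  obtain ⟨v, x⟩ := p
  have aux : ∀ {s t : ZMod n}, Adj s t → ∀ {v a}, E s v a → (¬ ∃ u, E t v u) →
      ¬ ∃ u, E t a u := by
    rintro s t hst v a h1 h2 ⟨u, h3⟩
    obtain ⟨a', c', x', e1, e2, e3, e4⟩ := lc a s t hst ⟨v, symm _ _ _ h1⟩ ⟨u, h3⟩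
    have : a' = v := func _ _ _ _ e1 (symm _ _ _ h1)
    subst this
    exact h2 ⟨_, e3⟩
  by_cases hs : ∃ u, E s v u <;> by_cases ht : ∃ u, E t v u
  · obtain ⟨a, c, y, h1, h2, h3, h4⟩ := lc v s t hst hs ht
    rw [actE_of func h2, actE_of func h4, actE_of func h1, actE_of func h3, ← mul_assoc,
      ← mul_assoc, simple_comm hn hst]
  · obtain ⟨a, h1⟩ := hs
    rw [actE_not ht, actE_of func h1, actE_not (aux hst h1 ht)]
  · obtain ⟨a, h1⟩ := ht
    rw [actE_not hs, actE_of func h1, actE_not (aux hst.symm h1 hs)]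
  · rw [actE_not hs, actE_not ht, actE_not hs]

theorem actE_fst (func : ∀ s v u u', E s v u → E s v u' → u = u')
    (s : ZMod n) (p : V × PolyGroup n) : (actE E s p).1 = (actE E s (p.1, 1)).1 := by
  obtain ⟨v, x⟩ := p
  by_cases h : ∃ u, E s v u
  · obtain ⟨u, h⟩ := h
    rw [actE_of func h, actE_of func h]
  · rw [actE_not h, actE_not h]

theorem actE_right (func : ∀ s v u u', E s v u → E s v u' → u = u')
    (s : ZMod n) (v : V) (x y : PolyGroup n) :
    actE E s (v, x * y) = ((actE E s (v, x)).1, (actE E s (v, x)).2 * y) := by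
  by_cases h : ∃ u, E s v u
  · obtain ⟨u, h⟩ := h
    rw [actE_of func h, actE_of func h, mul_assoc]
  · rw [actE_not h, actE_not h]

end Retract

/-- Finitely generated subgroups of `W` are virtual retracts, in a length-decreasing way. -/
theorem virtual_retract {n : ℕ} (hn : 5 ≤ n) (H : Subgroup (PolyGroup n)) (hH : H.FG) :
    ∃ (K : Subgroup (PolyGroup n)) (r : K →* PolyGroup n), K.FiniteIndex ∧ H ≤ K ∧
      (∀ k, r k ∈ H) ∧ (∀ k : K, (k : PolyGroup n) ∈ H → r k = k) ∧
      (∀ k : K, (pcs n).length (r k) ≤ (pcs n).length (k : PolyGroup n)) := by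
  classical
  have : NeZero n := ⟨by omega⟩
  obtain ⟨T, hT⟩ := hH
  obtain ⟨Y0⟩ := PW.exists_init H T (fun h hh => hT ▸ Subgroup.subset_closure hh)
  obtain ⟨Y, lc⟩ := Y0.exists_LC hn
  have hfun : ∀ s v u u', Y.E s v u → Y.E s v u' → u = u' := fun _ _ _ _ h h' => Y.func h h'
  have hsym : ∀ s v u, Y.E s v u → Y.E s u v := fun _ _ _ h => Y.symm h
  let f : ZMod n → Function.End (Y.V × PolyGroup n) := fun s => actE Y.E s
  have hf : (polyMatrix n).IsLiftable f := by
    apply isLiftable_of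
    · intro i; funext p; exact actE_invol hsym hfun i p
    · intro i; funext p; exact actE_comm hn hsym hfun lc (Or.inl rfl) p
  let f1 : ZMod n → Function.End Y.V := fun s v => (actE Y.E s (v, 1)).1
  have hf1 : (polyMatrix n).IsLiftable f1 := by
    apply isLiftable_of
    · intro i; funext v
      change (actE Y.E i ((actE Y.E i (v, 1)).1, 1)).1 = v
      rw [← actE_fst hfun, actE_invol hsym hfun]
    · intro i; funext v
      change (actE Y.E i ((actE Y.E (i + 1) (v, 1)).1, 1)).1 =
        (actE Y.E (i + 1) ((actE Y.E i (v, 1)).1, 1)).1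
      rw [← actE_fst hfun, ← actE_fst hfun, actE_comm hn hsym hfun lc (Or.inl rfl)]
  let F : PolyGroup n →* Function.End (Y.V × PolyGroup n) := (pcs n).lift ⟨f, hf⟩
  let F1 : PolyGroup n →* Function.End Y.V := (pcs n).lift ⟨f1, hf1⟩
  have hFs : ∀ s p, F ((pcs n).simple s) p = actE Y.E s p := fun s p =>
    congrFun ((pcs n).lift_apply_simple hf s) p
  have hF1s : ∀ s v, F1 ((pcs n).simple s) v = (actE Y.E s (v, 1)).1 := fun s v =>
    congrFun ((pcs n).lift_apply_simple hf1 s) v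
  have hFm : ∀ w w' p, F (w * w') p = F w (F w' p) := fun w w' p => by rw [map_mul]; rfl
  have hF1m : ∀ w w' p, F1 (w * w') p = F1 w (F1 w' p) := fun w w' p => by rw [map_mul]; rfl
  have hFone : ∀ p, F 1 p = p := fun p => by rw [map_one]; rfl
  have hF1one : ∀ p, F1 1 p = p := fun p => by rw [map_one]; rfl
  have ha : ∀ w p, (F w p).1 = F1 w p.1 := by
    intro w p
    induction w using (pcs n).simple_induction_left with
    | one => rw [hFone, hF1one]
    | mul_simple_left w s ih =>
      rw [hFm, hF1m, hFs, hF1s, actE_fst hfun, ih]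
  have hb : ∀ w v x y, F w (v, x * y) = ((F w (v, x)).1, (F w (v, x)).2 * y) := by
    intro w v x y
    induction w using (pcs n).simple_induction_left with
    | one => rw [hFone, hFone]
    | mul_simple_left w s ih =>
      rw [hFm, hFm, hFs, hFs, ih, actE_right hfun]
  have hc : ∀ w, Y.lam (F w (Y.b, 1)).1 = ((F w (Y.b, 1)).2 : PolyGroup n ⧸ H) := by
    intro w
    induction w using (pcs n).simple_induction_left with
    | one => rw [hFone]; exact Y.hb
    | mul_simple_left w s ih =>
      rw [hFm, hFs]
      generalize F w (Y.b, 1) = q at ih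
      obtain ⟨v, x⟩ := q
      by_cases h : ∃ u, Y.E s v u
      · obtain ⟨u, h⟩ := h
        rw [actE_of hfun h]
        change Y.lam u = _
        rw [Y.hlam h, ih]
        rfl
      · rw [actE_not h]; exact ih
  have hd : ∀ l : List (ZMod n), ∃ l' : List (ZMod n), l'.length ≤ l.length ∧
      (F ((pcs n).wordProd l) (Y.b, 1)).2 = (pcs n).wordProd l' := by
    intro l
    induction l with
    | nil => exact ⟨[], le_rfl, by rw [(pcs n).wordProd_nil, hFone]⟩
    | cons s l ih =>
      obtain ⟨l', h1, h2⟩ := ih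
      rw [(pcs n).wordProd_cons, hFm, hFs]
      generalize F ((pcs n).wordProd l) (Y.b, 1) = q at h2
      obtain ⟨v, x⟩ := q
      by_cases h : ∃ u, Y.E s v u
      · obtain ⟨u, h⟩ := h
        refine ⟨s :: l', by simpa using h1, ?_⟩
        rw [actE_of hfun h, (pcs n).wordProd_cons, ← h2]
      · refine ⟨l', by simp only [List.length_cons]; omega, ?_⟩
        rw [actE_not h]; exact h2
  have he : ∀ (l : List (ZMod n)) (v u : Y.V), PathE Y.E l v u →
      F ((pcs n).wordProd l) (v, 1) = (u, (pcs n).wordProd l) := by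
    intro l
    induction l with
    | nil => intro v u h; rw [(pcs n).wordProd_nil, hFone]; exact congrArg (·, 1) h
    | cons s l ih =>
      rintro v u ⟨m, h1, h2⟩
      rw [(pcs n).wordProd_cons, hFm, ih v m h1, hFs, actE_of hfun h2]
  let K : Subgroup (PolyGroup n) :=
    { carrier := {w | F1 w Y.b = Y.b}
      mul_mem' := by
        intro x y hx hy
        change F1 (x * y) Y.b = Y.b
        rw [hF1m, hy, hx]
      one_mem' := hF1one _
      inv_mem' := by
        intro x hx
        change F1 x⁻¹ Y.b = Y.b
        change F1 x Y.b = Y.b at hx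
        conv_lhs => rw [← hx]
        rw [← hF1m, inv_mul_cancel, hF1one] }
  have hKmem : ∀ w, w ∈ K ↔ F1 w Y.b = Y.b := fun w => Iff.rfl
  have hKF : ∀ w, w ∈ K → F w (Y.b, 1) = (Y.b, (F w (Y.b, 1)).2) := by
    intro w hw
    refine Prod.ext ?_ rfl
    rw [ha]; exact hw
  let r : K →* PolyGroup n :=
    { toFun := fun k => (F k (Y.b, 1)).2
      map_one' := by
        change (F 1 (Y.b, 1)).2 = 1
        rw [hFone]
      map_mul' := by
        intro k k'
        change (F ((k : PolyGroup n) * k') (Y.b, 1)).2 = _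
        rw [hFm, hKF k' k'.2]
        have := hb k Y.b 1 (F k' (Y.b, 1)).2
        rw [one_mul] at this
        rw [this] }
  have hr : ∀ k : K, r k = (F k (Y.b, 1)).2 := fun k => rfl
  have hHF : ∀ h ∈ H, F h (Y.b, 1) = (Y.b, h) := by
    intro h hh
    rw [← hT] at hh
    induction hh using Subgroup.closure_induction with
    | mem x hx =>
      obtain ⟨l, hl, hp⟩ := Y.loops x hx
      have := he l _ _ hp
      rwa [hl] at this
    | one => exact hFone _
    | mul x y _ _ hx hy =>
      have := hb x Y.b 1 y
      rw [one_mul] at this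
      rw [hFm, hy, this, hx]
    | inv x _ hx =>
      have h1 : F x⁻¹ (F x (Y.b, 1)) = (Y.b, 1) := by rw [← hFm, inv_mul_cancel, hFone]
      have := hb x⁻¹ Y.b 1 x
      rw [one_mul] at this
      rw [hx, this, Prod.mk.injEq] at h1
      exact Prod.ext h1.1 (eq_inv_of_mul_eq_one_left h1.2)
  refine ⟨K, r, ?_, ?_, ?_, ?_, ?_⟩
  · let _ : MulAction (PolyGroup n) Y.V := MulAction.compHom _ F1
    have hst : K = MulAction.stabilizer (PolyGroup n) Y.b := by
      ext w; exact Iff.rfl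
    rw [hst]
    refine ⟨?_⟩
    rw [MulAction.index_stabilizer]
    exact ((Set.ncard_pos (Set.toFinite _)).2 ⟨_, MulAction.mem_orbit_self Y.b⟩).ne'
  · intro h hh
    rw [hKmem, ← ha h (Y.b, 1), hHF h hh]
  · intro k
    have h1 := hc k
    rw [hKF k k.2] at h1
    rw [Y.hb, QuotientGroup.eq] at h1
    simpa [hr] using h1
  · intro k hk
    rw [hr, hHF k hk]
  · intro k
    obtain ⟨l, hl, hk⟩ := (pcs n).exists_isReduced (k : PolyGroup n)
    obtain ⟨l', h1, h2⟩ := hd l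
    rw [hr, hk, h2, hl]
    exact ((pcs n).length_wordProd_le l').trans h1

end SurfSep

namespace SurfSep

section Rep

variable {n : ℕ} [NeZero n]

open Classical in
/-- The off-identity coefficients of the geometric representation. -/
noncomputable def coefR (s j : ZMod n) : ℤ := if j = s then -2 else if Adj s j then 0 else 2

/-- The reflection matrix. -/
noncomputable def reflR (s : ZMod n) : Matrix (ZMod n) (ZMod n) ℤ :=
  1 + Matrix.vecMulVec (Pi.single s 1) (coefR s)

theorem reflR_mul_apply (A : Matrix (ZMod n) (ZMod n) ℤ) (t i j : ZMod n) :
    (A * reflR t) i j = A i j + A i t * coefR t j := by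
  rw [reflR, mul_add, mul_one, Matrix.add_apply, Matrix.mul_apply]
  congr 1
  rw [Finset.sum_eq_single t]
  · simp [Matrix.vecMulVec_apply]
  · intro b _ hb
    simp [Matrix.vecMulVec_apply, hb]
  · simp

theorem reflR_liftable (hn : 5 ≤ n) :
    (polyMatrix n).IsLiftable (reflR : ZMod n → Matrix (ZMod n) (ZMod n) ℤ) := by
  have key : ∀ s t i j : ZMod n, (reflR s * reflR t) i j =
      (1 : Matrix (ZMod n) (ZMod n) ℤ) i j + (1 : Matrix (ZMod n) (ZMod n) ℤ) i s * coefR s j +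
      ((1 : Matrix (ZMod n) (ZMod n) ℤ) i t + (1 : Matrix (ZMod n) (ZMod n) ℤ) i s * coefR s t) *
        coefR t j := by
    intro s t i j
    have h : ∀ j, reflR s i j = (1 : Matrix (ZMod n) (ZMod n) ℤ) i j +
        (1 : Matrix (ZMod n) (ZMod n) ℤ) i s * coefR s j := by
      intro j
      rw [← reflR_mul_apply, one_mul]
    rw [reflR_mul_apply, h, h]
  apply isLiftable_of
  · intro s
    ext i j
    rw [key]
    have : coefR s s = -2 := by simp [coefR]
    rw [this]; ring
  · intro s
    ext i j
    rw [key, key]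
    have hne := (show Adj s (s + 1) from Or.inl rfl).ne hn
    have h1 : coefR s (s + 1) = 0 := by
      rw [coefR, if_neg hne.symm, if_pos (show Adj s (s + 1) from Or.inl rfl)]
    have h2 : coefR (s + 1) s = 0 := by
      rw [coefR, if_neg hne, if_pos (show Adj (s + 1) s from Or.inr rfl)]
    rw [h1, h2]; ring

/-- The geometric representation. -/
noncomputable def repR (hn : 5 ≤ n) : PolyGroup n →* Matrix (ZMod n) (ZMod n) ℤ :=
  (pcs n).lift ⟨reflR, reflR_liftable hn⟩

theorem repR_mul_simple (hn : 5 ≤ n) (w : PolyGroup n) (t i j : ZMod n) :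
    repR hn (w * (pcs n).simple t) i j = repR hn w i j + repR hn w i t * coefR t j := by
  have h : repR hn ((pcs n).simple t) = reflR t :=
    (pcs n).lift_apply_simple (reflR_liftable hn) t
  rw [map_mul, h, reflR_mul_apply]

theorem repR_pos (hn : 5 ≤ n) (i : ZMod n) : ∀ (N : ℕ) (w : PolyGroup n), (pcs n).length w = N →
    ∀ s, ¬ (pcs n).IsRightDescent w s → (0 ≤ repR hn w i s ∧
      ∀ t, t ≠ s → ¬ Adj s t → (pcs n).IsRightDescent w t →
        repR hn w i t ≤ 0 ∧ 0 ≤ repR hn w i s + repR hn w i t) := by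
  intro N
  induction N using Nat.strong_induction_on with
  | _ N ih =>
    intro w hw s hs
    have second : ∀ t, t ≠ s → ¬ Adj s t → (pcs n).IsRightDescent w t →
        repR hn w i t ≤ 0 ∧ 0 ≤ repR hn w i s + repR hn w i t := by
      intro t hts hadj ht
      have hw1 : w = w * (pcs n).simple t * (pcs n).simple t := by
        rw [(pcs n).simple_mul_simple_cancel_right]
      have hl := (pcs n).isRightDescent_iff.1 ht
      have ht1 := (pcs n).isRightDescent_iff_not_isRightDescent_mul.1 ht
      have e1 : repR hn w i s = repR hn (w * (pcs n).simple t) i s +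
          2 * repR hn (w * (pcs n).simple t) i t := by
        conv_lhs => rw [hw1, repR_mul_simple]
        have : coefR t s = 2 := by
          rw [coefR, if_neg hts.symm, if_neg (fun h => hadj h.symm)]
        rw [this]; ring
      have e2 : repR hn w i t = - repR hn (w * (pcs n).simple t) i t := by
        conv_lhs => rw [hw1, repR_mul_simple]
        have : coefR t t = -2 := by simp [coefR]
        rw [this]; ring
      have ih1 := ih _ (by omega) (w * (pcs n).simple t) rfl
      obtain ⟨p1, p2⟩ := ih1 t ht1
      by_cases hs1 : (pcs n).IsRightDescent (w * (pcs n).simple t) s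
      · have := p2 s hts.symm (fun h => hadj h.symm) hs1
        omega
      · have := (ih1 s hs1).1
        omega
    refine ⟨?_, second⟩
    by_cases hw1 : w = 1
    · rw [hw1, map_one, Matrix.one_apply]
      split_ifs <;> norm_num
    · obtain ⟨t, ht⟩ := (pcs n).exists_rightDescent_of_ne_one hw1
      have hts : t ≠ s := by rintro rfl; exact hs ht
      by_cases hadj : Adj s t
      · have hw1 : w = w * (pcs n).simple t * (pcs n).simple t := by
          rw [(pcs n).simple_mul_simple_cancel_right]
        have hl := (pcs n).isRightDescent_iff.1 ht
        have hls := (pcs n).not_isRightDescent_iff.1 hs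
        have e1 : repR hn w i s = repR hn (w * (pcs n).simple t) i s := by
          conv_lhs => rw [hw1, repR_mul_simple]
          have : coefR t s = 0 := by
            rw [coefR, if_neg hts.symm, if_pos hadj.symm]
          rw [this]; ring
        rw [e1]
        refine (ih _ (by omega) (w * (pcs n).simple t) rfl s ?_).1
        intro hd
        have hd' := (pcs n).isRightDescent_iff.1 hd
        have h3 : w * (pcs n).simple s =
            w * (pcs n).simple t * (pcs n).simple s * (pcs n).simple t := by
          rw [mul_assoc (w * (pcs n).simple t), simple_comm hn hadj, ← mul_assoc,
            (pcs n).simple_mul_simple_cancel_right]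
        have h4 := (pcs n).length_mul_le (w * (pcs n).simple t * (pcs n).simple s)
          ((pcs n).simple t)
        rw [← h3, (pcs n).length_simple] at h4
        omega
      · have := second t hts hadj ht
        omega

theorem repR_injective (hn : 5 ≤ n) : ∀ w : PolyGroup n, repR hn w = 1 → w = 1 := by
  intro w hw
  by_contra hne
  obtain ⟨s, hs⟩ := (pcs n).exists_rightDescent_of_ne_one hne
  have hw1 : w = w * (pcs n).simple s * (pcs n).simple s := by
    rw [(pcs n).simple_mul_simple_cancel_right]
  have ht1 := (pcs n).isRightDescent_iff_not_isRightDescent_mul.1 hs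
  have h := (repR_pos hn s _ _ rfl s ht1).1
  have e2 : repR hn w s s = - repR hn (w * (pcs n).simple s) s s := by
    conv_lhs => rw [hw1, repR_mul_simple]
    have : coefR s s = -2 := by simp [coefR]
    rw [this]; ring
  rw [hw, Matrix.one_apply_eq] at e2
  omega

theorem repR_bound (hn : 5 ≤ n) (w : PolyGroup n) (i j : ZMod n) :
    |repR hn w i j| ≤ 3 ^ (pcs n).length w := by
  have key : ∀ l : List (ZMod n), ∀ j, |repR hn ((pcs n).wordProd l) i j| ≤ 3 ^ l.length := by
    intro l
    induction l using List.reverseRecOn with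
    | nil =>
      intro j
      rw [(pcs n).wordProd_nil, map_one, Matrix.one_apply]
      split_ifs <;> simp
    | append_singleton l t ih =>
      intro j
      rw [(pcs n).wordProd_append, (pcs n).wordProd_singleton, repR_mul_simple,
        List.length_append, List.length_singleton, pow_succ]
      have hc : |coefR t j| ≤ 2 := by
        unfold coefR
        split_ifs <;> simp
      have h1 := ih j
      have h2 := ih t
      refine (abs_add_le _ _).trans ?_
      rw [abs_mul]
      have h3 : |repR hn ((pcs n).wordProd l) i t| * |coefR t j| ≤ 3 ^ l.length * 2 := by
        gcongr
      linarith
  obtain ⟨l, hl, hk⟩ := (pcs n).exists_isReduced w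
  have := key l j
  rw [hk, hl]
  exact this

end Rep

end SurfSep

namespace SurfSep

section Surface

open scoped commutatorElement

/-- The quotient map onto the surface group. -/
noncomputable def sProj (g : ℕ) : FreeGroup (Fin g ⊕ Fin g) →* SurfaceGroup g :=
  PresentedGroup.mk ({surfaceRelator g} : Set (FreeGroup (Fin g ⊕ Fin g)))

theorem sProj_rel (g : ℕ) : sProj g (surfaceRelator g) = 1 :=
  PresentedGroup.one_of_mem (rels := {surfaceRelator g}) rfl

open Classical in
/-- The generators `a`, extended by one. -/
noncomputable def sA (g j : ℕ) : SurfaceGroup g :=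
  if h : j < g then sProj g (FreeGroup.of (Sum.inl ⟨j, h⟩)) else 1

open Classical in
/-- The generators `b`, extended by one. -/
noncomputable def sB (g j : ℕ) : SurfaceGroup g :=
  if h : j < g then sProj g (FreeGroup.of (Sum.inr ⟨j, h⟩)) else 1

/-- Partial products of the `a`. -/
noncomputable def sP (g j : ℕ) : SurfaceGroup g := ((List.range j).map (sA g)).prod

/-- Tail products of the `a`. -/
noncomputable def sE (g j : ℕ) : SurfaceGroup g := (sP g j)⁻¹ * sP g g

/-- Conjugated `b`. -/
noncomputable def sO (g j : ℕ) : SurfaceGroup g := (sE g (j + 1))⁻¹ * sB g j * sE g (j + 1)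

/-- Partial products of the commutators. -/
noncomputable def sU (g j : ℕ) : SurfaceGroup g :=
  ((List.range j).map (fun i => ⁅sA g i, sB g i⁆)).prod

theorem sE_top (g : ℕ) : sE g g = 1 := by simp [sE]

theorem sB_top (g : ℕ) : sB g g = 1 := by simp [sB]

theorem sO_top (g : ℕ) : sO g g = 1 := by simp [sO, sB_top]

theorem sU_zero (g : ℕ) : sU g 0 = 1 := by simp [sU]

theorem map_finRange_val {β : Type*} (g : ℕ) (c : ℕ → β) :
    (List.finRange g).map (fun i => c i.val) = (List.range g).map c := by
  rw [← List.map_coe_finRange_eq_range, List.map_map]; rfl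

theorem sU_top (g : ℕ) : sU g g = 1 := by
  rw [← sProj_rel g, surfaceRelator, map_list_prod, List.map_map, sU, ← map_finRange_val]
  congr 1
  refine List.map_congr_left fun i _ => ?_
  simp [sA, sB, map_commutatorElement]

theorem sA_eq (g j : ℕ) : sA g j = sE g j * (sE g (j + 1))⁻¹ := by
  have : sP g (j + 1) = sP g j * sA g j := List.prod_range_succ _ _
  rw [sE, sE, this]; group

theorem sB_eq (g j : ℕ) : sB g j = sE g (j + 1) * sO g j * (sE g (j + 1))⁻¹ := by
  rw [sO]; group

theorem sU_succ (g j : ℕ) : sU g (j + 1) = sU g j * (sE g j * sO g j * (sE g j)⁻¹ *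
    sE g (j + 1) * (sO g j)⁻¹ * (sE g (j + 1))⁻¹) := by
  have : sU g (j + 1) = sU g j * ⁅sA g j, sB g j⁆ := List.prod_range_succ _ _
  rw [this, sA_eq, sB_eq, commutatorElement_def]; group

theorem surf_lift {g : ℕ} {G : Type*} [Group G] (E O U : ℕ → G) (hE : E g = 1) (hO : O g = 1)
    (hU0 : U 0 = 1) (hUg : U g = 1)
    (hU : ∀ j < g, U (j + 1) = U j * (E j * O j * (E j)⁻¹ * E (j + 1) * (O j)⁻¹ * (E (j + 1))⁻¹)) :
    ∃ h : SurfaceGroup g →* G, ∀ j ≤ g, h (sE g j) = E j ∧ h (sO g j) = O j ∧ h (sU g j) = U j := by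
  let F : Fin g ⊕ Fin g → G := Sum.elim (fun i => E i * (E (i + 1))⁻¹)
    (fun i => E (i + 1) * O i * (E (i + 1))⁻¹)
  have hrel : ∀ r ∈ ({surfaceRelator g} : Set (FreeGroup (Fin g ⊕ Fin g))),
      FreeGroup.lift F r = 1 := by
    rintro r rfl
    rw [surfaceRelator, map_list_prod, List.map_map]
    let c : ℕ → G := fun i => ⁅E i * (E (i + 1))⁻¹, E (i + 1) * O i * (E (i + 1))⁻¹⁆
    have h1 : (List.finRange g).map (⇑(FreeGroup.lift F) ∘ fun i =>
        ⁅FreeGroup.of (Sum.inl i : Fin g ⊕ Fin g), FreeGroup.of (Sum.inr i)⁆) =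
        (List.finRange g).map (fun i => c i.val) := by
      refine List.map_congr_left fun i _ => ?_
      simp [c, F, map_commutatorElement]
    rw [h1, map_finRange_val]
    have h2 : ∀ j ≤ g, ((List.range j).map c).prod = U j := by
      intro j
      induction j with
      | zero => intro _; simp [hU0]
      | succ j ih =>
        intro hj
        rw [List.prod_range_succ, ih (by omega), hU j (by omega)]
        simp only [c, commutatorElement_def]; group
    rw [h2 g le_rfl, hUg]
  let h : SurfaceGroup g →* G :=
    { toFun := fun x => PresentedGroup.toGroup hrel x
      map_one' := map_one (PresentedGroup.toGroup hrel)
      map_mul' := fun x y => map_mul (PresentedGroup.toGroup hrel) x y }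
  have hh : ∀ x, h (sProj g (FreeGroup.of x)) = F x := fun x => PresentedGroup.toGroup.of hrel
  have hA : ∀ j < g, h (sA g j) = E j * (E (j + 1))⁻¹ := by
    intro j hj
    rw [sA, dif_pos hj, hh]; rfl
  have hB : ∀ j < g, h (sB g j) = E (j + 1) * O j * (E (j + 1))⁻¹ := by
    intro j hj
    rw [sB, dif_pos hj, hh]; rfl
  have hEE : ∀ k j, j + k = g → h (sE g j) = E j := by
    intro k
    induction k with
    | zero =>
      intro j hj
      obtain rfl : j = g := by omega
      rw [sE_top, map_one, hE]
    | succ k ih =>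
      intro j hj
      have h1 : sE g j = sA g j * sE g (j + 1) := by rw [sA_eq]; group
      rw [h1, map_mul, hA j (by omega), ih (j + 1) (by omega)]; group
  have hEE' : ∀ j ≤ g, h (sE g j) = E j := fun j hj => hEE (g - j) j (by omega)
  have hOO : ∀ j ≤ g, h (sO g j) = O j := by
    intro j hj
    rcases Nat.lt_or_eq_of_le hj with hj | rfl
    · rw [sO, map_mul, map_mul, map_inv, hB j hj, hEE' (j + 1) hj]; group
    · rw [sO_top, map_one, hO]
  refine ⟨h, fun j hj => ⟨hEE' j hj, hOO j hj, ?_⟩⟩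
  induction j with
  | zero => rw [sU_zero, map_one, hU0]
  | succ j ih =>
    rw [sU_succ, hU j hj, map_mul, ih (by omega)]
    simp only [map_mul, map_inv]
    rw [hEE' j (by omega), hEE' (j + 1) hj, hOO j (by omega)]

theorem surf_closure (g : ℕ) : Subgroup.closure (surfaceGens g) = ⊤ :=
  PresentedGroup.closure_range_of ({surfaceRelator g} : Set (FreeGroup (Fin g ⊕ Fin g)))

theorem surf_gens_eq {g : ℕ} {x : SurfaceGroup g} (hx : x ∈ surfaceGens g) :
    ∃ j < g, x = sA g j ∨ x = sB g j := by
  obtain ⟨i | i, rfl⟩ := hx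
  · refine ⟨i, i.2, Or.inl ?_⟩
    rw [sA, dif_pos i.2]; rfl
  · refine ⟨i, i.2, Or.inr ?_⟩
    rw [sB, dif_pos i.2]; rfl

theorem surf_ext {g : ℕ} {M : Type*} [Monoid M] (h h' : SurfaceGroup g →* M)
    (hE : ∀ j ≤ g, h (sE g j) = h' (sE g j)) (hO : ∀ j ≤ g, h (sO g j) = h' (sO g j)) :
    h = h' := by
  have key : Subgroup.closure (surfaceGens g) ≤ h.eqLocus h' := by
    rw [Subgroup.closure_le]
    intro x hx
    obtain ⟨j, hj, hx⟩ := surf_gens_eq hx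
    have e1 : sE g j ∈ h.eqLocus h' := hE j hj.le
    have e2 : sE g (j + 1) ∈ h.eqLocus h' := hE (j + 1) hj
    have e3 : sO g j ∈ h.eqLocus h' := hO j hj.le
    rcases hx with rfl | rfl
    · rw [sA_eq]
      exact mul_mem e1 (inv_mem e2)
    · rw [sB_eq]
      exact mul_mem (mul_mem e2 e3) (inv_mem e2)
  rw [surf_closure] at key
  exact MonoidHom.ext fun x => key (Subgroup.mem_top x)

/-- The two commuting involutions. -/
theorem exists_alpha_beta (g : ℕ) : ∃ α β : SurfaceGroup g →* SurfaceGroup g,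
    (∀ x, α (α x) = x) ∧ (∀ x, β (β x) = x) ∧ (∀ x, α (β x) = β (α x)) ∧
    (∀ j ≤ g, α (sE g j) = (sE g j)⁻¹ ∧ β (sO g j) = (sO g j)⁻¹ ∧
      α (sO g j) = sU g j * sE g j * sO g j * (sE g j)⁻¹ ∧
      β (sE g j) = sU g j * sE g j) := by
  obtain ⟨α, hα⟩ := surf_lift (g := g) (fun j => (sE g j)⁻¹)
    (fun j => sU g j * sE g j * sO g j * (sE g j)⁻¹) (fun j => (sE g j)⁻¹ * (sU g j)⁻¹ * sE g j)
    (by simp [sE_top]) (by simp [sE_top, sO_top, sU_top]) (by simp [sU_zero]) (by simp [sU_top])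
    (by
      intro j hj
      simp only [sU_succ]
      group)
  obtain ⟨β, hβ⟩ := surf_lift (g := g) (fun j => sU g j * sE g j)
    (fun j => (sO g j)⁻¹) (fun j => (sU g j)⁻¹)
    (by simp [sE_top, sU_top]) (by simp [sO_top]) (by simp [sU_zero]) (by simp [sU_top])
    (by
      intro j hj
      simp only [sU_succ]
      group)
  refine ⟨α, β, ?_, ?_, ?_, fun j hj => ⟨(hα j hj).1, (hβ j hj).2.1, (hα j hj).2.1, (hβ j hj).1⟩⟩
  · have : α.comp α = MonoidHom.id _ := by
      refine surf_ext _ _ (fun j hj => ?_) (fun j hj => ?_)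
      · simp [hα j hj]
      · simp only [MonoidHom.comp_apply, MonoidHom.id_apply, hα j hj, map_mul, map_inv]; group
    exact fun x => DFunLike.congr_fun this x
  · have : β.comp β = MonoidHom.id _ := by
      refine surf_ext _ _ (fun j hj => ?_) (fun j hj => ?_)
      · simp only [MonoidHom.comp_apply, MonoidHom.id_apply, hβ j hj, map_mul, map_inv]; group
      · simp [hβ j hj]
    exact fun x => DFunLike.congr_fun this x
  · have : α.comp β = β.comp α := by
      refine surf_ext _ _ (fun j hj => ?_) (fun j hj => ?_)
      · simp only [MonoidHom.comp_apply, hα j hj, hβ j hj, map_mul, map_inv]; group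
      · simp only [MonoidHom.comp_apply, hα j hj, hβ j hj, map_mul, map_inv]; group
    exact fun x => DFunLike.congr_fun this x

end Surface

end SurfSep

namespace SurfSep

section Embed

variable (g : ℕ)

/-- The simple reflections with natural indices. -/
noncomputable def sg (k : ℕ) : PolyGroup (2 * g + 2) := (pcs (2 * g + 2)).simple (k : ZMod (2 * g + 2))

theorem sg_sq (k : ℕ) : sg g k * sg g k = 1 := (pcs (2 * g + 2)).simple_mul_simple_self _

theorem sg_inv (k : ℕ) : (sg g k)⁻¹ = sg g k := (pcs (2 * g + 2)).inv_simple _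

theorem sg_comm (hg : 2 ≤ g) (k : ℕ) : sg g k * sg g (k + 1) = sg g (k + 1) * sg g k :=
  simple_comm (by omega) (Or.inl (by push_cast; rfl))

theorem sg_last : sg g (2 * g + 1 + 1) = sg g 0 := by
  unfold sg
  congr 1
  rw [show 2 * g + 1 + 1 = 2 * g + 2 by ring, ZMod.natCast_self, Nat.cast_zero]

theorem exists_embed (hg : 2 ≤ g) : ∃ f : SurfaceGroup g →* PolyGroup (2 * g + 2),
    ∀ j ≤ g, f (sE g j) = sg g (2 * g) * sg g (2 * j) ∧
      f (sO g j) = sg g (2 * g + 1) * sg g (2 * j + 1) := by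
  obtain ⟨f, hf⟩ := surf_lift (g := g) (fun j => sg g (2 * g) * sg g (2 * j))
    (fun j => sg g (2 * g + 1) * sg g (2 * j + 1))
    (fun j => sg g (2 * g + 1) * (sg g (2 * g) * sg g (2 * j)) * sg g (2 * g + 1) *
      (sg g (2 * g) * sg g (2 * j))⁻¹)
    (sg_sq g _) (sg_sq g _)
    (by
      have h1 := sg_comm g hg (2 * g)
      have h2 := sg_comm g hg (2 * g + 1)
      rw [sg_last] at h2
      have h3 : sg g (2 * g + 1) * (sg g (2 * g) * sg g (2 * 0)) =
          (sg g (2 * g) * sg g (2 * 0)) * sg g (2 * g + 1) := by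
        rw [mul_zero, ← mul_assoc, ← h1, mul_assoc, h2, mul_assoc]
      rw [h3, mul_assoc _ _ (sg g (2 * g + 1)), sg_sq, mul_one, mul_inv_cancel])
    (by rw [sg_sq, mul_one, sg_sq, inv_one, mul_one])
    (by
      intro j hj
      have h1 := sg_comm g hg (2 * j)
      have h2 := sg_comm g hg (2 * j + 1)
      have e : 2 * (j + 1) = 2 * j + 1 + 1 := by ring
      rw [e]
      have i1 := sg_inv g (2 * j + 1)
      have i2 := sg_inv g (2 * g + 1)
      have hqq := sg_sq g (2 * g + 1)
      have key : sg g (2 * j + 1) * ((sg g (2 * j))⁻¹ * sg g (2 * j + 1 + 1)) *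
          (sg g (2 * j + 1))⁻¹ = (sg g (2 * j))⁻¹ * sg g (2 * j + 1 + 1) := by
        rw [sg_inv, mul_inv_eq_iff_eq_mul, ← mul_assoc, ← h1, mul_assoc, h2, mul_assoc]
      have key2 : sg g (2 * j + 1) * (sg g (2 * j))⁻¹ * sg g (2 * j + 1 + 1) *
          (sg g (2 * j + 1))⁻¹ = (sg g (2 * j))⁻¹ * sg g (2 * j + 1 + 1) := by
        rw [← key]; group
      generalize sg g (2 * j) = x at *
      generalize sg g (2 * j + 1) = y at *
      generalize sg g (2 * j + 1 + 1) = z at *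
      generalize sg g (2 * g) = p at *
      generalize sg g (2 * g + 1) = q at *
      calc q * (p * z) * q * (p * z)⁻¹
          = q * (p * x) * (x⁻¹ * z) * q * (p * z)⁻¹ := by group
        _ = q * (p * x) * (y * x⁻¹ * z * y⁻¹) * q * (p * z)⁻¹ := by rw [key2]
        _ = q * (p * x) * (y * x⁻¹ * z * y⁻¹) * q⁻¹ * (p * z)⁻¹ := by rw [i2]
        _ = q * (p * x) * (q * q) * (y * x⁻¹ * z * y⁻¹) * q⁻¹ * (p * z)⁻¹ := by
          rw [hqq, mul_one]
        _ = _ := by group)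
  exact ⟨f, fun j hj => ⟨(hf j hj).1, (hf j hj).2.1⟩⟩

theorem exists_left_inverse (hg : 2 ≤ g) :
    ∃ Θ : PolyGroup (2 * g + 2) →* Function.End (SurfaceGroup g),
    ∀ j ≤ g, ∀ x, Θ (sg g (2 * g) * sg g (2 * j)) x = sE g j * x ∧
      Θ (sg g (2 * g + 1) * sg g (2 * j + 1)) x = sO g j * x := by
  obtain ⟨α, β, hαα, hββ, hαβ, hv⟩ := exists_alpha_beta g
  let θ' : ℕ → Function.End (SurfaceGroup g) := fun k =>
    if k % 2 = 0 then (fun x => α (sE g (k / 2) * x)) else (fun x => β (sO g (k / 2) * x))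
  have he : ∀ j x, θ' (2 * j) x = α (sE g j * x) := by
    intro j x
    have h1 : 2 * j % 2 = 0 := by omega
    have h2 : 2 * j / 2 = j := by omega
    have h3 : θ' (2 * j) = fun x => α (sE g j * x) := by
      simp only [θ', h2]
      exact if_pos h1
    exact congrFun h3 x
  have ho : ∀ j x, θ' (2 * j + 1) x = β (sO g j * x) := by
    intro j x
    have h1 : ¬ (2 * j + 1) % 2 = 0 := by omega
    have h2 : (2 * j + 1) / 2 = j := by omega
    have h3 : θ' (2 * j + 1) = fun x => β (sO g j * x) := by
      simp only [θ', h2]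
      exact if_neg h1
    exact congrFun h3 x
  let θ : ZMod (2 * g + 2) → Function.End (SurfaceGroup g) := fun i => θ' i.val
  have hsq : ∀ k, k < 2 * g + 2 → ∀ x, θ' k (θ' k x) = x := by
    intro k hk x
    rcases Nat.even_or_odd' k with ⟨j, rfl | rfl⟩
    · have hj : j ≤ g := by omega
      rw [he, he, map_mul, hαα, (hv j hj).1, inv_mul_cancel_left]
    · have hj : j ≤ g := by omega
      rw [ho, ho, map_mul, hββ, (hv j hj).2.1, inv_mul_cancel_left]
  have hk3 : ∀ j ≤ g, β (α (sO g j)) = (sU g j * sE g j * sO g j * (sE g j)⁻¹)⁻¹ := by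
    intro j hj
    rw [← hαβ, (hv j hj).2.1, map_inv, (hv j hj).2.2.1]
  have hc1 : ∀ k, k + 1 < 2 * g + 2 → ∀ x, θ' k (θ' (k + 1) x) = θ' (k + 1) (θ' k x) := by
    intro k hk x
    rcases Nat.even_or_odd' k with ⟨j, rfl | rfl⟩
    · have hj : j ≤ g := by omega
      rw [he, ho, ho, he]
      simp only [map_mul, hαβ]
      rw [(hv j hj).1, hk3 j hj, (hv j hj).2.1, map_inv, (hv j hj).2.2.2]
      group
    · have hj : j ≤ g := by omega
      have hj1 : j + 1 ≤ g := by omega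
      have e : 2 * j + 1 + 1 = 2 * (j + 1) := by ring
      rw [e, ho, he, he, ho]
      simp only [map_mul, hαβ]
      rw [(hv (j + 1) hj1).1, hk3 j hj, (hv j hj).2.1, map_inv,
        (hv (j + 1) hj1).2.2.2, sU_succ]
      group
  have hc2 : ∀ x, θ' (2 * g + 1) (θ' 0 x) = θ' 0 (θ' (2 * g + 1) x) := by
    intro x
    have e : (0 : ℕ) = 2 * 0 := rfl
    rw [ho, e, he, he, ho, sO_top, one_mul, one_mul, map_mul, map_mul, map_mul,
      (hv 0 (by omega)).1, map_inv, (hv 0 (by omega)).2.2.2, sU_zero, one_mul, hαβ]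
  have hlift : (polyMatrix (2 * g + 2)).IsLiftable θ := by
    apply isLiftable_of
    · intro i; funext x; exact hsq _ (ZMod.val_lt i) x
    · intro i; funext x
      change θ' i.val (θ' (i + 1).val x) = θ' (i + 1).val (θ' i.val x)
      have h1 : (1 : ZMod (2 * g + 2)).val = 1 := by
        have : Fact (1 < 2 * g + 2) := ⟨by omega⟩
        exact ZMod.val_one _
      have hlt := ZMod.val_lt i
      by_cases hi : i.val + 1 < 2 * g + 2
      · rw [ZMod.val_add_of_lt (by rw [h1]; exact hi), h1]
        exact hc1 _ hi x
      · have hi' : i.val = 2 * g + 1 := by omega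
        have h2 : (i + 1).val = 0 := by
          rw [ZMod.val_add, h1, hi', show 2 * g + 1 + 1 = 2 * g + 2 by ring, Nat.mod_self]
        rw [h2, hi']
        exact hc2 x
  let Θ : PolyGroup (2 * g + 2) →* Function.End (SurfaceGroup g) := (pcs _).lift ⟨θ, hlift⟩
  have hΘ : ∀ k, k < 2 * g + 2 → Θ (sg g k) = θ' k := by
    intro k hk
    have h1 : Θ (sg g k) = θ (k : ZMod (2 * g + 2)) := (pcs _).lift_apply_simple hlift _
    rw [h1]
    change θ' (k : ZMod (2 * g + 2)).val = θ' k
    rw [ZMod.val_natCast_of_lt hk]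
  refine ⟨Θ, fun j hj x => ⟨?_, ?_⟩⟩
  · rw [map_mul, hΘ _ (by omega), hΘ _ (by omega)]
    change θ' (2 * g) (θ' (2 * j) x) = _
    rw [he, he, sE_top, one_mul, hαα]
  · rw [map_mul, hΘ _ (by omega), hΘ _ (by omega)]
    change θ' (2 * g + 1) (θ' (2 * j + 1) x) = _
    rw [ho, ho, sO_top, one_mul, hββ]

/-- The surface group embeds in the polygon group, with generators of length at most six. -/
theorem surface_embed (hg : 2 ≤ g) : ∃ f : SurfaceGroup g →* PolyGroup (2 * g + 2),
    Function.Injective f ∧ ∀ x ∈ surfaceGens g, (pcs (2 * g + 2)).length (f x) ≤ 6 := by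
  obtain ⟨f, hf⟩ := exists_embed g hg
  obtain ⟨Θ, hΘ⟩ := exists_left_inverse g hg
  refine ⟨f, ?_, ?_⟩
  · let L : SurfaceGroup g →* Function.End (SurfaceGroup g) :=
      { toFun := fun γ x => γ * x
        map_one' := by funext x; exact one_mul x
        map_mul' := fun γ γ' => by funext x; exact mul_assoc γ γ' x }
    have hL : Θ.comp f = L := by
      refine surf_ext _ _ (fun j hj => ?_) (fun j hj => ?_)
      · rw [MonoidHom.comp_apply, (hf j hj).1]
        funext x; exact (hΘ j hj x).1
      · rw [MonoidHom.comp_apply, (hf j hj).2]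
        funext x; exact (hΘ j hj x).2
    intro x y hxy
    have h1 : L x = L y := by rw [← hL, MonoidHom.comp_apply, MonoidHom.comp_apply, hxy]
    have h2 : x * 1 = y * 1 := congrFun h1 1
    simpa using h2
  · intro x hx
    have hlen : ∀ l : List ℕ, (pcs (2 * g + 2)).length ((l.map (sg g)).prod) ≤ l.length := by
      intro l
      induction l with
      | nil => simp
      | cons k l ih =>
        rw [List.map_cons, List.prod_cons, List.length_cons]
        refine ((pcs (2 * g + 2)).length_mul_le _ _).trans ?_
        have : (pcs (2 * g + 2)).length (sg g k) = 1 := (pcs (2 * g + 2)).length_simple _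
        omega
    obtain ⟨j, hj, rfl | rfl⟩ := surf_gens_eq hx
    · have := hlen [2 * g, 2 * j, 2 * (j + 1), 2 * g]
      rw [sA_eq, map_mul, map_inv, (hf j hj.le).1, (hf (j + 1) hj).1, mul_inv_rev, sg_inv, sg_inv]
      simp only [List.map_cons, List.map_nil, List.prod_cons, List.prod_nil, mul_one,
        List.length_cons, List.length_nil] at this
      rw [mul_assoc]
      omega
    · have := hlen [2 * g, 2 * (j + 1), 2 * g + 1, 2 * j + 1, 2 * (j + 1), 2 * g]
      rw [sB_eq, map_mul, map_mul, map_inv, (hf (j + 1) hj).1, (hf j hj.le).2, mul_inv_rev,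
        sg_inv, sg_inv]
      simp only [List.map_cons, List.map_nil, List.prod_cons, List.prod_nil, mul_one,
        List.length_cons, List.length_nil] at this
      simp only [mul_assoc]
      omega

end Embed

end SurfSep

namespace SurfSep

section Final

theorem exists_not_dvd (z : ℤ) (hz : z ≠ 0) (N : ℕ) (hN : 1 ≤ N) (h : |z| ≤ 2 * 3 ^ (6 * N)) :
    ∃ m : ℕ, 1 ≤ m ∧ m ≤ 26 * N ∧ ¬ ((m : ℤ) ∣ z) := by
  by_contra hcon
  push Not at hcon
  set k := 12 * N + 1 with hk
  have h1 : Nat.lcmUpto (2 * k) ∣ z.natAbs := by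
    rw [Nat.lcmUpto]
    apply Finset.lcm_dvd
    intro m hm
    rw [Finset.mem_Icc] at hm
    have := hcon m hm.1 (by omega)
    simpa using Int.natAbs_dvd_natAbs.mpr this
  have h2 : Nat.centralBinom k ∣ z.natAbs := by
    rw [Nat.centralBinom]
    exact (Chebyshev.choose_dvd_lcmUpto (by omega)).trans h1
  have h3 : Nat.centralBinom k ≤ z.natAbs :=
    Nat.le_of_dvd (Int.natAbs_pos.mpr hz) h2
  have h4 := Nat.four_pow_lt_mul_centralBinom k (by omega)
  have h5 : k < 2 ^ k := Nat.lt_two_pow_self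
  have h6 : (2 : ℕ) ^ k < Nat.centralBinom k := by
    have e : (4 : ℕ) ^ k = 2 ^ k * 2 ^ k := by
      rw [← mul_pow]; norm_num
    rw [e] at h4
    by_contra hc
    push Not at hc
    have := Nat.mul_le_mul h5.le hc
    omega
  have h7 : z.natAbs ≤ 2 * 3 ^ (6 * N) := by
    zify
    exact h
  have h8 : (2 : ℕ) * 3 ^ (6 * N) ≤ 2 ^ k := by
    have e : (2 : ℕ) ^ k = 2 * 4 ^ (6 * N) := by
      rw [hk, pow_succ, show 12 * N = 2 * (6 * N) by ring, pow_mul]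
      norm_num
      ring
    rw [e]
    gcongr
    norm_num
  omega

theorem core_bound {Γ : Type} [Group Γ] (K : Subgroup Γ) [K.FiniteIndex] {P : Type} [Monoid P]
    [Finite P] (ψ : K →* P) :
    (ψ.ker.map K.subtype).normalCore.index ≠ 0 ∧
    (ψ.ker.map K.subtype).normalCore.index ≤ (K.index * Nat.card P) ^ K.index := by
  classical
  set M := ψ.ker.map K.subtype with hM
  have hMi : M.index ≠ 0 ∧ M.index ≤ K.index * Nat.card P := by
    have e : ψ.ker = ψ.toHomUnits.ker := by
      ext x
      simp [MonoidHom.mem_ker]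
    have h1 : ψ.ker.index = Nat.card ψ.toHomUnits.range := by rw [e, Subgroup.index_ker]
    have h2 : Nat.card ψ.toHomUnits.range ≤ Nat.card P :=
      (Nat.card_le_card_of_injective _ Subtype.val_injective).trans
        (Nat.card_le_card_of_injective _ Units.val_injective)
    have h3 : M.index = ψ.ker.index * K.index := Subgroup.index_map_subtype _
    rw [h3]
    constructor
    · have : Nat.card ψ.toHomUnits.range ≠ 0 := Nat.card_pos.ne'
      rw [h1]
      exact mul_ne_zero this Subgroup.FiniteIndex.index_ne_zero
    · rw [mul_comm, h1]
      gcongr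
  let F : Γ ⧸ K → Subgroup Γ := fun q => M.map (MulAut.conj q.out).toMonoidHom
  have hF : ∀ q, (F q).index = M.index := fun q => Subgroup.index_map_equiv _ (MulAut.conj q.out)
  have : Fintype (Γ ⧸ K) := Fintype.ofFinite _
  have hle : ⨅ q, F q ≤ M.normalCore := by
    intro x hx b
    rw [Subgroup.mem_iInf] at hx
    have hq := hx ((b⁻¹ : Γ) : Γ ⧸ K)
    obtain ⟨k, hk⟩ := QuotientGroup.mk_out_eq_mul K b⁻¹
    obtain ⟨y, hy, hyx⟩ := hq
    obtain ⟨z, hz, rfl⟩ := hy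
    have hx2 : b * x * b⁻¹ = ((k * z * k⁻¹ : K) : Γ) := by
      rw [← hyx]
      simp only [MulEquiv.coe_toMonoidHom, MulAut.conj_apply, hk]
      simp
      group
    rw [hx2]
    refine ⟨k * z * k⁻¹, ?_, rfl⟩
    have := MonoidHom.normal_ker ψ
    exact this.conj_mem _ hz _
  have h0 : (⨅ q, F q).index ≠ 0 :=
    Subgroup.index_iInf_ne_zero (fun q => by rw [hF]; exact hMi.1)
  have : (⨅ q, F q).FiniteIndex := ⟨h0⟩
  constructor
  · exact (Subgroup.finiteIndex_of_le hle).index_ne_zero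
  · refine (Subgroup.index_antitone hle).trans ((Subgroup.index_iInf_le F).trans ?_)
    simp only [hF, Finset.prod_const, Finset.card_univ]
    have : Fintype.card (Γ ⧸ K) = K.index := by
      rw [Subgroup.index, Nat.card_eq_fintype_card]
    rw [this]
    exact Nat.pow_le_pow_left hMi.2 _

theorem norm_attained {g : ℕ} (γ : SurfaceGroup g) :
    ∃ l : List (SurfaceGroup g), l.length = wordNorm (surfaceGens g) γ ∧
      (∀ x ∈ l, x ∈ surfaceGens g ∪ (surfaceGens g)⁻¹) ∧ l.prod = γ := by
  have : wordNorm (surfaceGens g) γ ∈ {m | ∃ l : List (SurfaceGroup g), l.length = m ∧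
      (∀ x ∈ l, x ∈ surfaceGens g ∪ (surfaceGens g)⁻¹) ∧ l.prod = γ} := by
    apply Nat.sInf_mem
    have hγ : γ ∈ Subgroup.closure (surfaceGens g) := by rw [surf_closure]; trivial
    rw [← Subgroup.mem_toSubmonoid, Subgroup.closure_toSubmonoid] at hγ
    obtain ⟨l, hl, hp⟩ := Submonoid.exists_list_of_mem_closure hγ
    refine ⟨l.length, l, rfl, ?_, hp⟩
    intro x hx
    rcases hl x hx with h | h
    · exact Or.inl h
    · exact Or.inr h
  exact this

theorem length_list {g n : ℕ} (f : SurfaceGroup g →* PolyGroup n)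
    (hf : ∀ x ∈ surfaceGens g, (pcs n).length (f x) ≤ 6) (l : List (SurfaceGroup g))
    (hl : ∀ x ∈ l, x ∈ surfaceGens g ∪ (surfaceGens g)⁻¹) :
    (pcs n).length (f l.prod) ≤ 6 * l.length := by
  induction l with
  | nil => simp
  | cons a l ih =>
    have h1 := ih (fun x hx => hl x (List.mem_cons_of_mem _ hx))
    have h2 : (pcs n).length (f a) ≤ 6 := by
      rcases hl a (List.mem_cons_self) with h | h
      · exact hf a h
      · have := hf _ h
        rwa [map_inv, CoxeterSystem.length_inv] at this
    rw [List.prod_cons, map_mul, List.length_cons]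
    have h3 := (pcs n).length_mul_le (f a) (f l.prod)
    omega

end Final

end SurfSep

namespace SurfSep

section Final

/-- Reduction modulo `m` of integer matrices. -/
noncomputable def redM (n m : ℕ) [NeZero n] :
    Matrix (ZMod n) (ZMod n) ℤ →* Matrix (ZMod n) (ZMod n) (ZMod m) :=
  RingHom.toMonoidHom (Int.castRingHom (ZMod m)).mapMatrix

theorem finIndex_comap {G G' : Type} [Group G] [Group G'] (f : G →* G') (K : Subgroup G')
    [K.FiniteIndex] : (K.comap f).FiniteIndex := by
  constructor
  rw [Subgroup.index_comap]
  exact Subgroup.FiniteIndex.index_ne_zero (H := K.subgroupOf f.range)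

theorem redM_apply {n m : ℕ} [NeZero n] (A : Matrix (ZMod n) (ZMod n) ℤ) (i j : ZMod n) :
    redM n m A i j = (A i j : ZMod m) := rfl

theorem core_step {g n : ℕ} [NeZero n] (hn : 5 ≤ n) (f : SurfaceGroup g →* PolyGroup n)
    (hf : Function.Injective f) (Δ : Subgroup (SurfaceGroup g)) (K : Subgroup (PolyGroup n))
    (r : K →* PolyGroup n) (hK : K.FiniteIndex) (hHK : Δ.map f ≤ K)
    (hr1 : ∀ k, r k ∈ Δ.map f) (hr2 : ∀ k : K, (k : PolyGroup n) ∈ Δ.map f → r k = k)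
    (hr3 : ∀ k : K, (pcs n).length (r k) ≤ (pcs n).length (k : PolyGroup n))
    (γ : SurfaceGroup g) (hγ : γ ∉ Δ) (N : ℕ) (hN : 1 ≤ N)
    (hlen : (pcs n).length (f γ) ≤ 6 * N) :
    ∃ M : Subgroup (SurfaceGroup g), M.Normal ∧ M.index ≠ 0 ∧
      M.index ≤ ((K.comap f).index * (26 * N) ^ (2 * n ^ 2)) ^ (K.comap f).index ∧
      ∀ h ∈ Δ, ∀ x ∈ M, γ ≠ h * x := by
  classical
  set K' := K.comap f with hK'
  have : K'.FiniteIndex := finIndex_comap f K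
  let fK : K' →* K := f.subgroupComap K
  let ψ (m : ℕ) : K' →* Matrix (ZMod n) (ZMod n) (ZMod m) × Matrix (ZMod n) (ZMod n) (ZMod m) :=
    (((redM n m).comp (repR hn)).comp (K.subtype.comp fK)).prod
      (((redM n m).comp (repR hn)).comp (r.comp fK))
  -- the size of the target
  have hcard : ∀ m : ℕ, 1 ≤ m → Finite (Matrix (ZMod n) (ZMod n) (ZMod m)) ∧
      Nat.card (Matrix (ZMod n) (ZMod n) (ZMod m) × Matrix (ZMod n) (ZMod n) (ZMod m))
        = m ^ (2 * n ^ 2) := by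
    intro m hm
    have : NeZero m := ⟨by omega⟩
    have e : Nat.card (Matrix (ZMod n) (ZMod n) (ZMod m)) = m ^ (n ^ 2) := by
      have : Nat.card (ZMod n → ZMod n → ZMod m) = m ^ (n ^ 2) := by
        simp [Nat.card_eq_fintype_card, ZMod.card, ← pow_mul, sq]
      exact this
    refine ⟨?_, ?_⟩
    · exact inferInstanceAs (Finite (ZMod n → ZMod n → ZMod m))
    · rw [Nat.card_prod, e, ← pow_add]
      congr 1
      ring
  -- choose the modulus
  have hm : ∃ m : ℕ, 1 ≤ m ∧ m ≤ 26 * N ∧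
      ∀ h ∈ Δ, ∀ x ∈ (ψ m).ker.map K'.subtype, γ ≠ h * x := by
    by_cases hγK : γ ∈ K'
    · let k : K := ⟨f γ, hγK⟩
      have hne : f γ ≠ r k := by
        intro he
        obtain ⟨δ, hδ, hδ'⟩ := hr1 k
        rw [← he] at hδ'
        exact hγ (hf hδ' ▸ hδ)
      have hrep : repR hn (f γ) ≠ repR hn (r k) := by
        intro he
        apply hne
        have h1 : repR hn ((f γ)⁻¹ * r k) = 1 := by
          rw [map_mul, ← he, ← map_mul, inv_mul_cancel, map_one]
        have h2 := repR_injective hn _ h1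
        exact (inv_mul_eq_one.mp h2)
      obtain ⟨i, j, hij⟩ : ∃ i j, repR hn (f γ) i j ≠ repR hn (r k) i j := by
        by_contra hc
        push Not at hc
        exact hrep (Matrix.ext hc)
      have b1 : |repR hn (f γ) i j| ≤ 3 ^ (6 * N) :=
        (repR_bound hn _ i j).trans (pow_le_pow_right₀ (by norm_num) hlen)
      have b2 : |repR hn (r k) i j| ≤ 3 ^ (6 * N) :=
        (repR_bound hn _ i j).trans (pow_le_pow_right₀ (by norm_num) ((hr3 k).trans hlen))
      obtain ⟨m, hm1, hm2, hm3⟩ := exists_not_dvd (repR hn (f γ) i j - repR hn (r k) i j)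
        (sub_ne_zero.mpr hij) N hN ((abs_sub _ _).trans (by linarith))
      refine ⟨m, hm1, hm2, ?_⟩
      rintro h hh _ ⟨x, hx, rfl⟩ he
      apply hm3
      have hfh : f h ∈ Δ.map f := ⟨h, hh, rfl⟩
      have hk : k = ⟨f h, hHK hfh⟩ * fK x := by
        apply Subtype.ext
        change f γ = f h * f x
        rw [he, map_mul]; rfl
      have hx' : ψ m x = 1 := hx
      have hx1 : redM n m (repR hn (f x)) = 1 := congrArg Prod.fst hx'
      have hx2 : redM n m (repR hn (r (fK x))) = 1 := congrArg Prod.snd hx'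
      have e1 : redM n m (repR hn (f γ)) = redM n m (repR hn (f h)) := by
        rw [he, map_mul, map_mul, map_mul]
        erw [hx1]
        rw [mul_one]
      have e2 : redM n m (repR hn (r k)) = redM n m (repR hn (f h)) := by
        rw [hk, map_mul, map_mul, map_mul, hx2, mul_one, hr2 _ hfh]
      have e3 := congrFun (congrFun (e1.trans e2.symm) i) j
      rw [redM_apply, redM_apply] at e3
      exact (ZMod.intCast_eq_intCast_iff_dvd_sub _ _ _).mp e3.symm
    · refine ⟨1, le_rfl, by omega, ?_⟩
      rintro h hh _ ⟨x, hx, rfl⟩ he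
      apply hγK
      rw [he]
      exact K'.mul_mem (hHK ⟨h, hh, rfl⟩) x.2
  obtain ⟨m, hm1, hm2, hm3⟩ := hm
  obtain ⟨hfin, hc⟩ := hcard m hm1
  obtain ⟨c1, c2⟩ := core_bound K' (ψ m)
  refine ⟨_, Subgroup.normalCore_normal _, c1, c2.trans ?_, ?_⟩
  · rw [hc]
    gcongr
  · intro h hh x hx
    exact hm3 h hh x (Subgroup.normalCore_le _ hx)

end Final

end SurfSep

/-- Corollary 1.2 (surface case): finitely generated subgroups of the genus-`g` surface
group, `g ≥ 2`, can be separated by finite quotients of size polynomial in the word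
length, with the same bound for the index of the separating subgroup and of its normal
core. -/
theorem surface_effective_separability (g : ℕ) (hg : 2 ≤ g)
    (Δ₀ : Subgroup (SurfaceGroup g)) (hΔ₀ : Δ₀.FG) :
    ∃ C D : ℝ, 0 < C ∧ 0 < D ∧
      ∀ γ : SurfaceGroup g, γ ∉ Δ₀ →
        ∃ (Q : Type) (_ : Group Q) (_ : Fintype Q) (φ : SurfaceGroup g →* Q),
          φ γ ∉ Δ₀.map φ ∧
          (Fintype.card Q : ℝ) ≤ C * (wordNorm (surfaceGens g) γ : ℝ) ^ D ∧
          Δ₀ ≤ Δ₀ ⊔ φ.ker ∧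
          γ ∉ Δ₀ ⊔ φ.ker ∧
          (Δ₀ ⊔ φ.ker).index ≤ Fintype.card Q ∧
          (Δ₀ ⊔ φ.ker).normalCore.index ≤ Fintype.card Q := by
  classical
  obtain ⟨n, hn, f, hf, hf6⟩ : ∃ n, 5 ≤ n ∧ ∃ f : SurfaceGroup g →* SurfSep.PolyGroup n,
      Function.Injective f ∧ ∀ x ∈ surfaceGens g, (SurfSep.pcs n).length (f x) ≤ 6 :=
    ⟨2 * g + 2, by omega, SurfSep.surface_embed g hg⟩
  have : NeZero n := ⟨by omega⟩
  have hFG : (Δ₀.map f).FG := by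
    obtain ⟨S, hS⟩ := hΔ₀
    refine ⟨S.image f, ?_⟩
    rw [Finset.coe_image, ← MonoidHom.map_closure, hS]
  obtain ⟨K, r, hK, hHK, hr1, hr2, hr3⟩ :=
    SurfSep.virtual_retract hn (Δ₀.map f) hFG
  have hKf := SurfSep.finIndex_comap f K
  set d := (K.comap f).index with hd
  have hd0 : 0 < d := Nat.pos_of_ne_zero (Subgroup.FiniteIndex.index_ne_zero (H := K.comap f))
  refine ⟨((d * 26 ^ (2 * n ^ 2)) ^ d : ℕ), ((2 * n ^ 2 * d : ℕ) : ℝ), ?_, ?_, ?_⟩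
  · exact_mod_cast (by positivity : 0 < (d * 26 ^ (2 * n ^ 2)) ^ d)
  · have : 0 < n := by omega
    exact_mod_cast (by positivity : 0 < 2 * n ^ 2 * d)
  intro γ hγ
  obtain ⟨l, hl1, hl2, hl3⟩ := SurfSep.norm_attained γ
  set N := wordNorm (surfaceGens g) γ with hNdef
  have hN : 1 ≤ N := by
    rcases Nat.eq_zero_or_pos N with h | h
    · rw [h, List.length_eq_zero_iff] at hl1
      rw [hl1, List.prod_nil] at hl3
      exact absurd (hl3 ▸ Δ₀.one_mem) hγ
    · exact h
  have hlen : (SurfSep.pcs n).length (f γ) ≤ 6 * N := by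
    have := SurfSep.length_list f hf6 l hl2
    rwa [hl3, hl1] at this
  obtain ⟨M, hMn, hM0, hMi, hM⟩ :=
    SurfSep.core_step hn f hf Δ₀ K r hK hHK hr1 hr2 hr3 γ hγ N hN hlen
  have hMF : M.FiniteIndex := ⟨hM0⟩
  have hfin : Fintype (SurfaceGroup g ⧸ M) := Fintype.ofFinite _
  have hcard : Fintype.card (SurfaceGroup g ⧸ M) = M.index := by
    rw [Subgroup.index, Nat.card_eq_fintype_card]
  have hker : (QuotientGroup.mk' M).ker = M := QuotientGroup.ker_mk' M
  have hnot : γ ∉ Δ₀ ⊔ M := by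
    intro h
    obtain ⟨y, hy, z, hz, hyz⟩ := Subgroup.mem_sup_of_normal_right.mp h
    exact hM y hy z hz hyz.symm
  refine ⟨SurfaceGroup g ⧸ M, inferInstance, hfin, QuotientGroup.mk' M, ?_, ?_, le_sup_left,
    ?_, ?_, ?_⟩
  · intro h
    rw [← Subgroup.mem_comap, Subgroup.comap_map_eq, hker] at h
    exact hnot h
  · rw [hcard, Real.rpow_natCast]
    have : M.index ≤ (d * 26 ^ (2 * n ^ 2)) ^ d * N ^ (2 * n ^ 2 * d) := by
      refine hMi.trans (le_of_eq ?_)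
      rw [mul_pow, mul_pow, mul_pow, mul_pow, ← pow_mul, ← pow_mul]
      ring
    exact_mod_cast this
  · rw [hker]; exact hnot
  · rw [hker, hcard]; exact Subgroup.index_antitone le_sup_right
  · rw [hker, hcard]
    exact Subgroup.index_antitone (Subgroup.normal_le_normalCore.mpr le_sup_right)
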